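/- arXiv:2407.20187 — 15 statements merged into one kernel-verified Lean document; each statement's English description precedes it below -/
import Mathlib

section
/- Let G = (V, E) be a two-coloured graph and let E' be an optimal MIAE solution. Then no edge of E' \ E joins two red nodes. -/
open Finset

variable {V : Type*}

/-- Number of blue neighbours of `v` in the graph on `V` with edge set `E'`. -/
def blueDeg [Fintype V] [DecidableEq V] (f : V → Bool) (E' : Finset (Sym2 V)) (v : V) : ℕ :=
  (Finset.univ.filter (fun u => u ≠ v ∧ s(u, v) ∈ E' ∧ f u = true)).card

/-- Number of red neighbours of `v` in the graph on `V` with edge set `E'`. -/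
def redDeg [Fintype V] [DecidableEq V] (f : V → Bool) (E' : Finset (Sym2 V)) (v : V) : ℕ :=
  (Finset.univ.filter (fun u => u ≠ v ∧ s(u, v) ∈ E' ∧ f u = false)).card

/-- No node is under majority illusion in `(V, E')`. -/
def NoIllusion [Fintype V] [DecidableEq V] (f : V → Bool) (E' : Finset (Sym2 V)) : Prop :=
  ∀ v : V, redDeg f E' v ≤ blueDeg f E' v

/-- An edge set of a simple graph contains no loops. -/
def Loopless (E' : Finset (Sym2 V)) : Prop := ∀ e ∈ E', ¬ e.IsDiag

/-- In an optimal MIAE solution, no added edge joins two red nodes. -/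
theorem stmt1 [Fintype V] [DecidableEq V] (f : V → Bool) (E E' : Finset (Sym2 V))
    (hE : Loopless E)
    (hsub : E ⊆ E') (hloop : Loopless E') (hfeas : NoIllusion f E')
    (hopt : ∀ E'' : Finset (Sym2 V), E ⊆ E'' → Loopless E'' → NoIllusion f E'' →
      (E' \ E).card ≤ (E'' \ E).card) :
    ∀ u v : V, s(u, v) ∈ E' \ E → ¬ (f u = false ∧ f v = false) := by
  rintro u v he ⟨hu, hv⟩
  have he' := Finset.mem_sdiff.mp he
  have h := hopt (E'.erase s(u, v))
    (fun e h => Finset.mem_erase.mpr ⟨fun h' => he'.2 (h' ▸ h), hsub h⟩)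
    (fun e h => hloop e (Finset.mem_of_mem_erase h))
    (by
      intro w
      have h1 : redDeg f (E'.erase s(u, v)) w ≤ redDeg f E' w := by
        unfold redDeg
        apply Finset.card_le_card
        intro x hx
        simp only [Finset.mem_filter, Finset.mem_erase] at hx ⊢
        exact ⟨hx.1, hx.2.1, hx.2.2.1.2, hx.2.2.2⟩
      have h2 : blueDeg f E' w ≤ blueDeg f (E'.erase s(u, v)) w := by
        unfold blueDeg
        apply Finset.card_le_card
        intro x hx
        simp only [Finset.mem_filter, Finset.mem_erase] at hx ⊢
        refine ⟨hx.1, hx.2.1, ⟨?_, hx.2.2.1⟩, hx.2.2.2⟩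
        intro h
        have hx' := hx.2.2.2
        rcases Sym2.eq_iff.mp h with ⟨rfl, rfl⟩ | ⟨rfl, rfl⟩ <;> simp_all
      exact h1.trans ((hfeas w).trans h2))
  have h3 : (E'.erase s(u, v)) \ E ⊂ E' \ E := by
    rw [Finset.ssubset_iff_of_subset (Finset.sdiff_subset_sdiff (Finset.erase_subset _ _) subset_rfl)]
    exact ⟨s(u, v), he, by simp⟩
  exact absurd (Finset.card_lt_card h3) (not_lt.mpr h)
end

section
/- Let G = (V, E) be a two-coloured graph and let E' be an optimal MIE solution. Then no edge of E' \ E joins two red nodes. -/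
open Finset

variable {V : Type*}

/-- In an optimal MIE solution, no added edge joins two red nodes. -/
theorem stmt2 [Fintype V] [DecidableEq V] (f : V → Bool) (E E' : Finset (Sym2 V))
    (hE : Loopless E)
    (hloop : Loopless E') (hfeas : NoIllusion f E')
    (hopt : ∀ E'' : Finset (Sym2 V), Loopless E'' → NoIllusion f E'' →
      (E \ E').card + (E' \ E).card ≤ (E \ E'').card + (E'' \ E).card) :
    ∀ u v : V, s(u, v) ∈ E' \ E → ¬ (f u = false ∧ f v = false) := by
  rintro u v huv ⟨hu, hv⟩
  have hmem := Finset.mem_sdiff.mp huv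
  have h1 : Loopless (E'.erase s(u, v)) := fun e he => hloop e (Finset.mem_of_mem_erase he)
  have h2 : NoIllusion f (E'.erase s(u, v)) := by
    intro w
    have hr : redDeg f (E'.erase s(u, v)) w ≤ redDeg f E' w := by
      unfold redDeg
      apply Finset.card_le_card
      intro x hx
      simp only [Finset.mem_filter, Finset.mem_univ, true_and, Finset.mem_erase] at hx ⊢
      exact ⟨hx.1, hx.2.1.2, hx.2.2⟩
    have hb : blueDeg f E' w ≤ blueDeg f (E'.erase s(u, v)) w := by
      unfold blueDeg
      apply Finset.card_le_card
      intro x hx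
      simp only [Finset.mem_filter, Finset.mem_univ, true_and, Finset.mem_erase] at hx ⊢
      refine ⟨hx.1, ⟨?_, hx.2.1⟩, hx.2.2⟩
      intro h
      rcases Sym2.eq_iff.mp h with ⟨rfl, _⟩ | ⟨rfl, _⟩ <;> simp_all
    exact hr.trans ((hfeas w).trans hb)
  have h3 := hopt _ h1 h2
  have e1 : E \ E'.erase s(u, v) = E \ E' := by
    ext e
    simp only [Finset.mem_sdiff, Finset.mem_erase]
    constructor
    · rintro ⟨he, hn⟩
      refine ⟨he, fun h => hn ⟨?_, h⟩⟩
      rintro rfl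
      exact hmem.2 he
    · rintro ⟨he, hn⟩
      exact ⟨he, fun h => hn h.2⟩
  have e2 : E'.erase s(u, v) \ E = (E' \ E).erase s(u, v) := by
    ext e
    simp only [Finset.mem_sdiff, Finset.mem_erase]
    tauto
  have h4 := Finset.card_erase_lt_of_mem huv
  rw [e1, e2] at h3
  omega
end

section
/- Let G = (V, E) be a two-coloured graph and let E' be an optimal MIRE solution. Then no edge of E \ E' joins two blue nodes. -/
open Finset

variable {V : Type*}

/-- In an optimal MIRE solution, no removed edge joins two blue nodes. -/
theorem stmt3 [Fintype V] [DecidableEq V] (f : V → Bool) (E E' : Finset (Sym2 V))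
    (hE : Loopless E)
    (hsub : E' ⊆ E) (hfeas : NoIllusion f E')
    (hopt : ∀ E'' : Finset (Sym2 V), E'' ⊆ E → NoIllusion f E'' →
      (E \ E').card ≤ (E \ E'').card) :
    ∀ u v : V, s(u, v) ∈ E \ E' → ¬ (f u = true ∧ f v = true) := by
  rintro u v huv ⟨hu, hv⟩
  obtain ⟨h1, h2⟩ := Finset.mem_sdiff.mp huv
  have key : NoIllusion f (insert s(u, v) E') := by
    intro w
    have hr : redDeg f (insert s(u, v) E') w ≤ redDeg f E' w := by
      apply Finset.card_le_card
      intro x hx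
      simp only [Finset.mem_filter, Finset.mem_univ, true_and, Finset.mem_insert] at hx ⊢
      obtain ⟨hxw, hx1 | hx1, hxr⟩ := hx
      · rcases Sym2.eq_iff.mp hx1 with ⟨rfl, rfl⟩ | ⟨rfl, rfl⟩ <;> simp_all
      · exact ⟨hxw, hx1, hxr⟩
    have hb : blueDeg f E' w ≤ blueDeg f (insert s(u, v) E') w := by
      apply Finset.card_le_card
      intro x hx
      simp only [Finset.mem_filter, Finset.mem_univ, true_and, Finset.mem_insert] at hx ⊢
      exact ⟨hx.1, Or.inr hx.2.1, hx.2.2⟩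
    exact hr.trans ((hfeas w).trans hb)
  have hle := hopt _ (Finset.insert_subset h1 hsub) key
  have hlt : (E \ insert s(u, v) E').card < (E \ E').card := by
    apply Finset.card_lt_card
    refine ⟨Finset.sdiff_subset_sdiff (Finset.Subset.refl _) (Finset.subset_insert _ _), ?_⟩
    intro h
    have := h huv
    simp at this
  omega
end

section
/- Let G = (V, E) be a two-coloured graph and let E' be an optimal MIE solution. Then no edge of E \ E' joins two blue nodes. -/
open Finset

variable {V : Type*}

/-- In an optimal MIE solution, no removed edge joins two blue nodes. -/
theorem stmt4 [Fintype V] [DecidableEq V] (f : V → Bool) (E E' : Finset (Sym2 V))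
    (hE : Loopless E)
    (hloop : Loopless E') (hfeas : NoIllusion f E')
    (hopt : ∀ E'' : Finset (Sym2 V), Loopless E'' → NoIllusion f E'' →
      (E \ E').card + (E' \ E).card ≤ (E \ E'').card + (E'' \ E).card) :
    ∀ u v : V, s(u, v) ∈ E \ E' → ¬ (f u = true ∧ f v = true) := by
  intro u v huv hb
  obtain ⟨hu, hv⟩ := hb
  have hmem := Finset.mem_sdiff.mp huv
  have hl : Loopless (insert s(u, v) E') := by
    intro e he
    rcases Finset.mem_insert.mp he with h | h
    · rw [h]; exact hE _ hmem.1
    · exact hloop e h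
  have hN : NoIllusion f (insert s(u, v) E') := by
    intro w
    have h1 : redDeg f (insert s(u, v) E') w ≤ redDeg f E' w := by
      unfold redDeg
      apply Finset.card_le_card
      intro x hx
      simp only [Finset.mem_filter, Finset.mem_univ, true_and, Finset.mem_insert] at hx ⊢
      obtain ⟨hne, h | h, hr⟩ := hx
      · exfalso
        rcases Sym2.eq_iff.mp h with ⟨h, _⟩ | ⟨h, _⟩ <;> simp_all
      · exact ⟨hne, h, hr⟩
    have h2 : blueDeg f E' w ≤ blueDeg f (insert s(u, v) E') w := by
      unfold blueDeg
      apply Finset.card_le_card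
      intro x hx
      simp only [Finset.mem_filter, Finset.mem_univ, true_and, Finset.mem_insert] at hx ⊢
      exact ⟨hx.1, Or.inr hx.2.1, hx.2.2⟩
    exact h1.trans ((hfeas w).trans h2)
  have h := hopt _ hl hN
  rw [Finset.insert_sdiff_of_mem _ hmem.1] at h
  have hlt : (E \ insert s(u, v) E').card < (E \ E').card := by
    apply Finset.card_lt_card
    rw [Finset.ssubset_iff_of_subset (Finset.sdiff_subset_sdiff subset_rfl (Finset.subset_insert _ _))]
    exact ⟨_, huv, by simp⟩
  omega
end

section
/- Let G = (V, E) be a two-coloured graph and let E' be any feasible MIAE solution. Then for every red node v, the number of edges of E' \ E incident to v is at least max(r(v) - b(v), 0), where b(v) and r(v) are the numbers of blue and red neighbours of v in (V, E). -/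
open Finset

variable {V : Type*}

/-- In any feasible MIAE solution, every red node `v` is incident to at least
`max(r(v) - b(v), 0)` added edges (here `max(r-b,0)` is the truncated subtraction `r - b` in ℕ). -/
theorem stmt5 [Fintype V] [DecidableEq V] (f : V → Bool) (E E' : Finset (Sym2 V))
    (hE : Loopless E)
    (hsub : E ⊆ E') (hloop : Loopless E') (hfeas : NoIllusion f E') :
    ∀ v : V, f v = false →
      redDeg f E v - blueDeg f E v ≤ ((E' \ E).filter (fun e => v ∈ e)).card := by
  intro v _
  have h1 : redDeg f E v ≤ redDeg f E' v := by
    apply Finset.card_le_card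
    intro u hu
    simp only [Finset.mem_filter, Finset.mem_univ, true_and] at hu ⊢
    exact ⟨hu.1, hsub hu.2.1, hu.2.2⟩
  have h2 : blueDeg f E' v ≤ blueDeg f E v + ((E' \ E).filter (fun e => v ∈ e)).card := by
    have h3 : (Finset.univ.filter (fun u => u ≠ v ∧ s(u, v) ∈ E' \ E ∧ f u = true)).card
        ≤ ((E' \ E).filter (fun e => v ∈ e)).card := by
      apply Finset.card_le_card_of_injOn (fun u => s(u, v))
      · intro u hu
        have hu' := (Finset.mem_filter.mp hu).2
        exact Finset.mem_filter.mpr ⟨hu'.2.1, Sym2.mem_mk_right u v⟩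
      · intro a _ b _ hab
        exact Sym2.congr_left.mp hab
    refine le_trans (le_trans (Finset.card_le_card ?_) (Finset.card_union_le _ _))
      (Nat.add_le_add_left h3 _)
    intro u hu
    simp only [Finset.mem_union, Finset.mem_filter, Finset.mem_univ, true_and,
      Finset.mem_sdiff] at hu ⊢
    tauto
  have h4 := hfeas v
  omega
end

section
/- Let G = (V, E) be a two-coloured graph and let E' be an optimal MIAE solution. Then for every red node v, the number of edges of E' \ E incident to v is exactly max(r(v) - b(v), 0), where b(v) and r(v) are the numbers of blue and red neighbours of v in (V, E). -/
open Finset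

variable {V : Type*}

theorem redDeg_mono_aux [Fintype V] [DecidableEq V] (f : V → Bool) {A C : Finset (Sym2 V)}
    (h : A ⊆ C) (x : V) : redDeg f A x ≤ redDeg f C x := by
  unfold redDeg
  apply Finset.card_le_card
  intro w hw
  simp only [Finset.mem_filter, Finset.mem_univ, true_and] at hw ⊢
  exact ⟨hw.1, h hw.2.1, hw.2.2⟩

theorem blueDeg_erase_same [Fintype V] [DecidableEq V] (f : V → Bool) (C : Finset (Sym2 V))
    (u v x : V) (hv : f v = false) (h : x = v → f u = false) :
    blueDeg f (C.erase s(u, v)) x = blueDeg f C x := by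
  unfold blueDeg
  congr 1
  ext w
  simp only [Finset.mem_filter, Finset.mem_univ, true_and, Finset.mem_erase, ne_eq, Sym2.eq_iff]
  grind

theorem blueDeg_erase_le [Fintype V] [DecidableEq V] (f : V → Bool) (C : Finset (Sym2 V))
    (u v : V) : blueDeg f C v ≤ blueDeg f (C.erase s(u, v)) v + 1 := by
  unfold blueDeg
  refine le_trans (Finset.card_le_card (t := insert u
    (Finset.univ.filter (fun w => w ≠ v ∧ s(w, v) ∈ C.erase s(u, v) ∧ f w = true))) ?_)
    (Finset.card_insert_le _ _)
  intro w hw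
  simp only [Finset.mem_filter, Finset.mem_univ, true_and, Finset.mem_erase, ne_eq, Sym2.eq_iff,
    Finset.mem_insert] at hw ⊢
  grind

/-- In an optimal MIAE solution, every red node `v` is incident to exactly
`max(r(v) - b(v), 0)` added edges (here `max(r-b,0)` is the truncated subtraction `r - b` in ℕ). -/
theorem stmt6 [Fintype V] [DecidableEq V] (f : V → Bool) (E E' : Finset (Sym2 V))
    (hE : Loopless E)
    (hsub : E ⊆ E') (hloop : Loopless E') (hfeas : NoIllusion f E')
    (hopt : ∀ E'' : Finset (Sym2 V), E ⊆ E'' → Loopless E'' → NoIllusion f E'' →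
      (E' \ E).card ≤ (E'' \ E).card) :
    ∀ v : V, f v = false →
      ((E' \ E).filter (fun e => v ∈ e)).card = redDeg f E v - blueDeg f E v := by
  have key : ∀ u v : V, f v = false → s(u, v) ∈ E' \ E →
      f u = true ∧ blueDeg f E' v ≤ redDeg f E' v := by
    intro u v hv he
    by_contra hcon
    have he' := Finset.mem_sdiff.1 he
    have h1 : E ⊆ E'.erase s(u, v) := fun e h =>
      Finset.mem_erase.2 ⟨fun h' => he'.2 (h' ▸ h), hsub h⟩
    have h2 : Loopless (E'.erase s(u, v)) := fun e h => hloop e (Finset.mem_of_mem_erase h)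
    have h3 : NoIllusion f (E'.erase s(u, v)) := by
      intro x
      have hr := redDeg_mono_aux f (Finset.erase_subset s(u, v) E') x
      have hx := hfeas x
      by_cases hc : x = v → f u = false
      · rw [blueDeg_erase_same f E' u v x hv hc]; omega
      · push Not at hc
        obtain ⟨rfl, hu⟩ := hc
        have := blueDeg_erase_le f E' u x
        have hu' : f u = true := by simpa using hu
        have : ¬ blueDeg f E' x ≤ redDeg f E' x := fun h => hcon ⟨hu', h⟩
        omega
    have h4 := hopt _ h1 h2 h3
    have h5 : E'.erase s(u, v) \ E = (E' \ E).erase s(u, v) := by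
      ext e; simp only [Finset.mem_sdiff, Finset.mem_erase]; tauto
    rw [h5] at h4
    have := Finset.card_erase_lt_of_mem he
    omega
  intro v hv
  have hred : redDeg f E' v = redDeg f E v := by
    unfold redDeg
    congr 1
    ext w
    simp only [Finset.mem_filter, Finset.mem_univ, true_and]
    refine ⟨fun ⟨a, b, c⟩ => ⟨a, ?_, c⟩, fun ⟨a, b, c⟩ => ⟨a, hsub b, c⟩⟩
    by_contra hn
    have := (key w v hv (Finset.mem_sdiff.2 ⟨b, hn⟩)).1
    simp [c] at this
  have hset : (E' \ E).filter (fun e => v ∈ e) =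
      (Finset.univ.filter (fun w => s(w, v) ∈ E' \ E)).image (fun w => s(w, v)) := by
    ext e
    simp only [Finset.mem_filter, Finset.mem_image, Finset.mem_univ, true_and]
    constructor
    · rintro ⟨he, hve⟩
      obtain ⟨w, rfl⟩ := hve
      exact ⟨w, by rwa [Sym2.eq_swap], Sym2.eq_swap⟩
    · rintro ⟨w, hw, rfl⟩
      exact ⟨hw, Sym2.mem_mk_right w v⟩
  have hcard : ((E' \ E).filter (fun e => v ∈ e)).card =
      (Finset.univ.filter (fun w => s(w, v) ∈ E' \ E)).card := by
    rw [hset]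
    apply Finset.card_image_of_injective
    intro a b hab
    exact Sym2.congr_left.1 hab
  have hblue : blueDeg f E' v = blueDeg f E v +
      (Finset.univ.filter (fun w => s(w, v) ∈ E' \ E)).card := by
    unfold blueDeg
    rw [← Finset.card_union_of_disjoint]
    · congr 1
      ext w
      simp only [Finset.mem_filter, Finset.mem_univ, true_and, Finset.mem_union]
      constructor
      · rintro ⟨a, b, c⟩
        by_cases h : s(w, v) ∈ E
        · exact Or.inl ⟨a, h, c⟩
        · exact Or.inr (Finset.mem_sdiff.2 ⟨b, h⟩)
      · rintro (⟨a, b, c⟩ | h)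
        · exact ⟨a, hsub b, c⟩
        · refine ⟨?_, (Finset.mem_sdiff.1 h).1, (key w v hv h).1⟩
          rintro rfl
          exact hloop _ (Finset.mem_sdiff.1 h).1 (by simp)
    · rw [Finset.disjoint_left]
      intro w hw hw'
      simp only [Finset.mem_filter, Finset.mem_univ, true_and, Finset.mem_sdiff] at hw hw'
      exact hw'.2 hw.2.1
  rw [hcard]
  have hf := hfeas v
  rcases Nat.eq_zero_or_pos (Finset.univ.filter (fun w => s(w, v) ∈ E' \ E)).card with h0 | h0
  · omega
  · obtain ⟨w, hw⟩ := Finset.card_pos.1 h0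
    have := (key w v hv (by simpa using hw)).2
    omega
end

section
/- Let G = (V, E) be a two-coloured graph and let E' be any feasible MIRE solution. Then for every blue node v, the number of edges of E \ E' incident to v is at least max(r(v) - b(v), 0), where b(v) and r(v) are the numbers of blue and red neighbours of v in (V, E). -/
open Finset

variable {V : Type*}

/-- In any feasible MIRE solution, every blue node `v` is incident to at least
`max(r(v) - b(v), 0)` removed edges (here `max(r-b,0)` is the truncated subtraction `r - b` in ℕ). -/
theorem stmt7 [Fintype V] [DecidableEq V] (f : V → Bool) (E E' : Finset (Sym2 V))
    (hE : Loopless E)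
    (hsub : E' ⊆ E) (hfeas : NoIllusion f E') :
    ∀ v : V, f v = true →
      redDeg f E v - blueDeg f E v ≤ ((E \ E').filter (fun e => v ∈ e)).card := by
  intro v _
  have hb : blueDeg f E' v ≤ blueDeg f E v := by
    unfold blueDeg
    apply Finset.card_le_card
    intro u hu
    simp only [Finset.mem_filter, Finset.mem_univ, true_and] at hu ⊢
    exact ⟨hu.1, hsub hu.2.1, hu.2.2⟩
  have hr : redDeg f E v ≤ redDeg f E' v + ((E \ E').filter (fun e => v ∈ e)).card := by
    unfold redDeg
    have h1 : (Finset.univ.filter (fun u => u ≠ v ∧ s(u, v) ∈ E \ E' ∧ f u = false)).card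
        ≤ ((E \ E').filter (fun e => v ∈ e)).card := by
      apply Finset.card_le_card_of_injOn (fun u => s(u, v))
      · intro u hu
        simp only [Finset.coe_filter, Finset.mem_univ, true_and, Set.mem_setOf_eq] at hu ⊢
        exact ⟨hu.2.1, Sym2.mem_mk_right u v⟩
      · intro a _ b _ hab
        exact Sym2.congr_left.mp hab
    refine le_trans ?_ (Nat.add_le_add_left h1 _)
    refine le_trans (Finset.card_le_card ?_) (Finset.card_union_le _ _)
    intro u hu
    simp only [Finset.mem_filter, Finset.mem_univ, true_and, Finset.mem_union,
      Finset.mem_sdiff] at hu ⊢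
    tauto
  have := hfeas v
  omega
end

section
/- Let G = (V, E) be a two-coloured graph and let E' be an optimal MIRE solution. Then for every blue node v, the number of edges of E \ E' incident to v is exactly max(r(v) - b(v), 0), where b(v) and r(v) are the numbers of blue and red neighbours of v in (V, E). -/
open Finset

variable {V : Type*}

/-- Number of neighbours of colour `c`. -/
def colDeg [Fintype V] [DecidableEq V] (f : V → Bool) (c : Bool) (E' : Finset (Sym2 V)) (v : V) :
    ℕ :=
  (Finset.univ.filter (fun u => u ≠ v ∧ s(u, v) ∈ E' ∧ f u = c)).card

lemma colDeg_insert_self [Fintype V] [DecidableEq V] (f : V → Bool) (c : Bool)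
    (E' : Finset (Sym2 V)) (a b : V) (hab : a ≠ b) (h : s(a, b) ∉ E') :
    colDeg f c (insert s(a, b) E') a = colDeg f c E' a + if f b = c then 1 else 0 := by
  unfold colDeg
  split_ifs with hc
  · rw [← Finset.card_insert_of_notMem (a := b)]
    · congr 1
      ext u
      simp only [Finset.mem_filter, Finset.mem_univ, true_and, Finset.mem_insert, Sym2.eq_iff]
      grind
    · simp only [Finset.mem_filter, Finset.mem_univ, true_and]
      rw [Sym2.eq_swap]
      tauto
  · rw [add_zero]
    congr 1
    ext u
    simp only [Finset.mem_filter, Finset.mem_univ, true_and, Finset.mem_insert, Sym2.eq_iff]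
    grind

lemma colDeg_insert_other [Fintype V] [DecidableEq V] (f : V → Bool) (c : Bool)
    (E' : Finset (Sym2 V)) (a b x : V) (hxa : x ≠ a) (hxb : x ≠ b) :
    colDeg f c (insert s(a, b) E') x = colDeg f c E' x := by
  unfold colDeg
  congr 1
  ext u
  simp only [Finset.mem_filter, Finset.mem_univ, true_and, Finset.mem_insert, Sym2.eq_iff]
  grind

lemma colDeg_sdiff [Fintype V] [DecidableEq V] (f : V → Bool) (c : Bool)
    (E E' : Finset (Sym2 V)) (hsub : E' ⊆ E) (v : V) :
    colDeg f c E v = colDeg f c E' v + colDeg f c (E \ E') v := by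
  unfold colDeg
  rw [← Finset.card_union_of_disjoint]
  · congr 1
    ext u
    simp only [Finset.mem_filter, Finset.mem_univ, true_and, Finset.mem_union, Finset.mem_sdiff]
    have := @hsub s(u, v)
    tauto
  · rw [Finset.disjoint_left]
    intro u
    simp only [Finset.mem_filter, Finset.mem_univ, true_and, Finset.mem_sdiff]
    tauto

lemma card_incident [Fintype V] [DecidableEq V] (f : V → Bool)
    (D : Finset (Sym2 V)) (hD : Loopless D) (v : V) :
    (D.filter (fun e => v ∈ e)).card = colDeg f true D v + colDeg f false D v := by
  unfold colDeg
  rw [← Finset.card_union_of_disjoint]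
  · symm
    apply Finset.card_bij (fun u _ => s(u, v))
    · intro u
      simp only [Finset.mem_filter, Finset.mem_univ, true_and, Finset.mem_union, Sym2.mem_iff]
      tauto
    · intro u _ w _ h
      have h2 := Sym2.eq_iff.1 h
      grind
    · intro e he
      obtain ⟨heD, hve⟩ := Finset.mem_filter.1 he
      obtain ⟨u, rfl⟩ := Sym2.mem_iff_exists.1 hve
      have h1 := hD _ heD
      rw [Sym2.mk_isDiag_iff] at h1
      refine ⟨u, ?_, Sym2.eq_swap⟩
      rw [Sym2.eq_swap] at heD
      simp only [Finset.mem_filter, Finset.mem_univ, true_and, Finset.mem_union]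
      cases f u <;> simp [heD, Ne.symm h1]
  · rw [Finset.disjoint_left]
    intro u
    simp only [Finset.mem_filter, Finset.mem_univ, true_and]
    rintro ⟨_, _, h⟩ ⟨_, _, h'⟩
    simp_all

/-- In an optimal MIRE solution, every blue node `v` is incident to exactly
`max(r(v) - b(v), 0)` removed edges (here `max(r-b,0)` is the truncated subtraction `r - b` in ℕ). -/
theorem stmt8 [Fintype V] [DecidableEq V] (f : V → Bool) (E E' : Finset (Sym2 V))
    (hE : Loopless E)
    (hsub : E' ⊆ E) (hfeas : NoIllusion f E')
    (hopt : ∀ E'' : Finset (Sym2 V), E'' ⊆ E → NoIllusion f E'' →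
      (E \ E').card ≤ (E \ E'').card) :
    ∀ v : V, f v = true →
      ((E \ E').filter (fun e => v ∈ e)).card = redDeg f E v - blueDeg f E v := by
  have hb : ∀ D v, blueDeg f D v = colDeg f true D v := fun _ _ => rfl
  have hr : ∀ D v, redDeg f D v = colDeg f false D v := fun _ _ => rfl
  simp only [NoIllusion, hb, hr] at *
  -- adding back one removed edge at a blue node `v`
  have key : ∀ u v : V, f v = true → u ≠ v → s(u, v) ∈ E \ E' →
      (f u = false → colDeg f false E' v + 1 ≤ colDeg f true E' v) → False := by
    intro u v hv huv he hred
    obtain ⟨heE, heE'⟩ := Finset.mem_sdiff.1 he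
    have hlt : (E \ insert s(u, v) E').card < (E \ E').card := by
      apply Finset.card_lt_card
      rw [Finset.ssubset_iff_of_subset
        (Finset.sdiff_subset_sdiff (Finset.Subset.refl _) (Finset.subset_insert _ _))]
      exact ⟨_, he, by simp⟩
    refine absurd (hopt (insert s(u, v) E') (Finset.insert_subset heE hsub) ?_) (not_le.2 hlt)
    intro x
    have hx := hfeas x
    by_cases hxu : x = u
    · subst hxu
      rw [colDeg_insert_self f _ E' x v huv heE', colDeg_insert_self f _ E' x v huv heE']
      simp [hv]
      omega
    by_cases hxv : x = v
    · subst hxv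
      rw [Sym2.eq_swap] at heE' ⊢
      rw [colDeg_insert_self f _ E' x u hxu heE', colDeg_insert_self f _ E' x u hxu heE']
      cases hu : f u
      · simpa using hred hu
      · simp
        omega
    · rw [colDeg_insert_other f _ E' u v x hxu hxv, colDeg_insert_other f _ E' u v x hxu hxv]
      exact hx
  intro v hv
  rw [card_incident f (E \ E') (fun e he => hE e (Finset.mem_sdiff.1 he).1) v]
  have h1 := colDeg_sdiff f true E E' hsub v
  have h2 := colDeg_sdiff f false E E' hsub v
  have h3 := hfeas v
  have h4 : colDeg f true (E \ E') v = 0 := by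
    by_contra h
    obtain ⟨u, hu⟩ := Finset.card_pos.1 (Nat.pos_of_ne_zero h)
    obtain ⟨huv, he, hfu⟩ := (Finset.mem_filter.1 hu).2
    exact key u v hv huv he (by simp [hfu])
  have h5 : 0 < colDeg f false (E \ E') v → colDeg f true E' v ≤ colDeg f false E' v := by
    intro h
    obtain ⟨u, hu⟩ := Finset.card_pos.1 h
    obtain ⟨huv, he, hfu⟩ := (Finset.mem_filter.1 hu).2
    by_contra hlt
    exact key u v hv huv he (fun _ => by omega)
  omega
end

section
/- Let G = (V, E) be a two-coloured graph with strictly more blue nodes than red nodes. Let E* be the set of all non-edges of G that are not between two red nodes, i.e. E* consists of the non-edges joining a red node to a blue node together with the non-edges joining two blue nodes. Then the minimum of |E' \ E| over all feasible MIAE solutions E' equals the minimum of |S| over all edge sets S ⊆ E* satisfying: (i) for every red node v, the number of blue nodes u with uv ∈ S equals max(r(v) - b(v), 0); and (ii) for every blue node v, (the number of red nodes u with uv ∈ S) minus (the number of blue nodes u with uv ∈ S) is at most b(v) - r(v). Moreover, the sets E ∪ S for S attaining this minimum are exactly the optimal MIAE solutions. -/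
open Finset

variable {V : Type*}

/-- The availability graph: all non-edges of `G` that are not between two red nodes. -/
def avail [Fintype V] [DecidableEq V] (f : V → Bool) (E : Finset (Sym2 V)) : Finset (Sym2 V) :=
  Finset.univ.filter (fun e : Sym2 V => ¬ e.IsDiag ∧ e ∉ E ∧ ¬ (∀ v ∈ e, f v = false))

/-- The condition of the integer program (IP-1a): `S ⊆ E*`, every red node gets exactly
`max(r(v)-b(v),0)` new blue neighbours, and for every blue node the number of new red
neighbours minus the number of new blue neighbours is at most `b(v) - r(v)`. -/
def addCond [Fintype V] [DecidableEq V] (f : V → Bool) (E S : Finset (Sym2 V)) : Prop :=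
  S ⊆ avail f E ∧
  (∀ v : V, f v = false →
    (Finset.univ.filter (fun u => f u = true ∧ s(u, v) ∈ S)).card
      = redDeg f E v - blueDeg f E v) ∧
  (∀ v : V, f v = true →
    ((Finset.univ.filter (fun u => f u = false ∧ s(u, v) ∈ S)).card : ℤ)
      - ((Finset.univ.filter (fun u => f u = true ∧ s(u, v) ∈ S)).card : ℤ)
      ≤ (blueDeg f E v : ℤ) - (redDeg f E v : ℤ))

lemma aux_blue [Fintype V] [DecidableEq V] (f : V → Bool) (E S : Finset (Sym2 V)) (v : V)
    (h1 : ∀ e ∈ S, e ∉ E) (h2 : Loopless S) :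
    blueDeg f (E ∪ S) v = blueDeg f E v +
      (Finset.univ.filter (fun u => f u = true ∧ s(u, v) ∈ S)).card := by
  unfold blueDeg
  rw [← Finset.card_union_of_disjoint]
  · congr 1
    ext u
    have := h2 s(u, v)
    simp only [Finset.mem_filter, Finset.mem_univ, true_and, Finset.mem_union, Sym2.mk_isDiag_iff]
      at this ⊢
    tauto
  · rw [Finset.disjoint_left]
    intro u
    have := h1 s(u, v)
    simp only [Finset.mem_filter, Finset.mem_univ, true_and]
    tauto

lemma aux_red [Fintype V] [DecidableEq V] (f : V → Bool) (E S : Finset (Sym2 V)) (v : V)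
    (h1 : ∀ e ∈ S, e ∉ E) (h2 : Loopless S) :
    redDeg f (E ∪ S) v = redDeg f E v +
      (Finset.univ.filter (fun u => f u = false ∧ s(u, v) ∈ S)).card := by
  unfold redDeg
  rw [← Finset.card_union_of_disjoint]
  · congr 1
    ext u
    have := h2 s(u, v)
    simp only [Finset.mem_filter, Finset.mem_univ, true_and, Finset.mem_union, Sym2.mk_isDiag_iff]
      at this ⊢
    tauto
  · rw [Finset.disjoint_left]
    intro u
    have := h1 s(u, v)
    simp only [Finset.mem_filter, Finset.mem_univ, true_and]
    tauto

lemma aux_red_erase [Fintype V] [DecidableEq V] (f : V → Bool) (E : Finset (Sym2 V)) (e : Sym2 V)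
    (v : V) : redDeg f (E.erase e) v ≤ redDeg f E v := by
  unfold redDeg
  apply Finset.card_le_card
  intro u
  simp only [Finset.mem_filter, Finset.mem_univ, true_and, Finset.mem_erase]
  tauto

lemma aux_blue_erase [Fintype V] [DecidableEq V] (f : V → Bool) (E : Finset (Sym2 V)) (e : Sym2 V)
    (v : V) (h : ∀ u, f u = true → s(u, v) ≠ e) : blueDeg f (E.erase e) v = blueDeg f E v := by
  unfold blueDeg
  congr 1
  ext u
  have := h u
  simp only [Finset.mem_filter, Finset.mem_univ, true_and, Finset.mem_erase]
  tauto

lemma aux_blue_erase' [Fintype V] [DecidableEq V] (f : V → Bool) (E : Finset (Sym2 V))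
    (a v : V) : blueDeg f E v ≤ blueDeg f (E.erase s(a, v)) v + 1 := by
  unfold blueDeg
  rw [← Finset.card_singleton a]
  refine le_trans (Finset.card_le_card ?_) (Finset.card_union_le _ _)
  intro u
  by_cases h : u = a
  · simp [h]
  · have : s(u, v) ≠ s(a, v) := by
      intro hh
      rcases Sym2.eq_iff.1 hh with ⟨h3, _⟩ | ⟨h3, h4⟩
      · exact h h3
      · exact h (h3.trans h4)
    simp only [Finset.mem_filter, Finset.mem_univ, true_and, Finset.mem_erase, Finset.mem_union]
    tauto

lemma addCond_props [Fintype V] [DecidableEq V] {f : V → Bool} {E S : Finset (Sym2 V)}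
    (h : addCond f E S) : (∀ e ∈ S, e ∉ E) ∧ Loopless S ∧ ∀ e ∈ S, ¬ (∀ v ∈ e, f v = false) := by
  refine ⟨fun e he => ?_, fun e he => ?_, fun e he => ?_⟩ <;>
  · have := h.1 he
    simp only [avail, Finset.mem_filter, Finset.mem_univ, true_and] at this
    tauto

lemma addCond_sdiff [Fintype V] [DecidableEq V] {f : V → Bool} {E S : Finset (Sym2 V)}
    (h : addCond f E S) : (E ∪ S) \ E = S := by
  ext e
  have := (addCond_props h).1 e
  simp only [Finset.mem_sdiff, Finset.mem_union]
  tauto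

lemma addCond_feasible [Fintype V] [DecidableEq V] {f : V → Bool} {E S : Finset (Sym2 V)}
    (hE : Loopless E) (h : addCond f E S) :
    E ⊆ E ∪ S ∧ Loopless (E ∪ S) ∧ NoIllusion f (E ∪ S) := by
  obtain ⟨h1, h2, h3⟩ := addCond_props h
  refine ⟨Finset.subset_union_left, ?_, ?_⟩
  · intro e he
    rcases Finset.mem_union.1 he with he | he
    · exact hE e he
    · exact h2 e he
  · intro v
    rw [aux_blue f E S v h1 h2, aux_red f E S v h1 h2]
    cases hv : f v
    · have h0 : (Finset.univ.filter (fun u => f u = false ∧ s(u, v) ∈ S)) = ∅ := by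
        ext u
        simp only [Finset.mem_filter, Finset.mem_univ, true_and, Finset.notMem_empty, iff_false]
        rintro ⟨hu, hs⟩
        apply h3 _ hs
        intro w hw
        rcases Sym2.mem_iff.1 hw with rfl | rfl <;> assumption
      rw [h0, h.2.1 v hv, Finset.card_empty]
      omega
    · have := h.2.2 v hv
      omega

lemma optimal_addCond [Fintype V] [DecidableEq V] {f : V → Bool} {E E' : Finset (Sym2 V)}
    (h : E ⊆ E' ∧ Loopless E' ∧ NoIllusion f E')
    (hopt : ∀ E'' : Finset (Sym2 V), E ⊆ E'' → Loopless E'' → NoIllusion f E'' →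
          (E' \ E).card ≤ (E'' \ E).card) : addCond f E (E' \ E) := by
  obtain ⟨hsub, hl, hn⟩ := h
  have key : ∀ e ∈ E' \ E, ¬ NoIllusion f (E'.erase e) := by
    intro e he hne
    have he' := Finset.mem_sdiff.1 he
    have := hopt (E'.erase e) (Finset.subset_erase.2 ⟨hsub, he'.2⟩)
      (fun x hx => hl x (Finset.mem_of_mem_erase hx)) hne
    rw [Finset.erase_sdiff_comm] at this
    exact absurd this (not_le.2 (Finset.card_erase_lt_of_mem he))
  have hrr : ∀ e ∈ E' \ E, ¬ (∀ v ∈ e, f v = false) := by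
    intro e he hred
    refine key e he fun v => ?_
    rw [aux_blue_erase]
    · exact (aux_red_erase f E' e v).trans (hn v)
    · rintro u hu rfl
      have := hred u (Sym2.mem_mk_left u v)
      simp [hu] at this
  have h1 : ∀ e ∈ E' \ E, e ∉ E := fun e he => (Finset.mem_sdiff.1 he).2
  have h2 : Loopless (E' \ E) := fun e he => hl e (Finset.mem_sdiff.1 he).1
  have hb := fun v => aux_blue f E (E' \ E) v h1 h2
  have hr := fun v => aux_red f E (E' \ E) v h1 h2
  simp only [Finset.union_sdiff_of_subset hsub] at hb hr
  refine ⟨?_, ?_, ?_⟩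
  · intro e he
    simp only [avail, Finset.mem_filter, Finset.mem_univ, true_and]
    exact ⟨h2 e he, h1 e he, hrr e he⟩
  · intro v hv
    have h0 : (Finset.univ.filter (fun u => f u = false ∧ s(u, v) ∈ E' \ E)) = ∅ := by
      ext u
      simp only [Finset.mem_filter, Finset.mem_univ, true_and, Finset.notMem_empty, iff_false]
      rintro ⟨hu, hs⟩
      apply hrr _ hs
      intro w hw
      rcases Sym2.mem_iff.1 hw with rfl | rfl <;> assumption
    have hbv := hb v
    have hrv := hr v
    rw [h0, Finset.card_empty] at hrv
    have hnv := hn v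
    by_contra hne
    have hpos : 0 < (Finset.univ.filter (fun u => f u = true ∧ s(u, v) ∈ E' \ E)).card := by
      omega
    obtain ⟨u, hu⟩ := Finset.card_pos.1 hpos
    simp only [Finset.mem_filter, Finset.mem_univ, true_and] at hu
    refine key _ hu.2 fun w => ?_
    have hred := aux_red_erase f E' s(u, v) w
    by_cases hw : w = v
    · subst hw
      have := aux_blue_erase' f E' u w
      omega
    · rw [aux_blue_erase]
      · exact hred.trans (hn w)
      · intro x hx hxe
        rcases Sym2.eq_iff.1 hxe with ⟨_, h⟩ | ⟨h, _⟩
        · exact hw h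
        · rw [h, hv] at hx
          cases hx
  · intro v _
    have hbv := hb v
    have hrv := hr v
    have hnv := hn v
    omega

lemma exists_optimal [Fintype V] [DecidableEq V] {f : V → Bool} {E E' : Finset (Sym2 V)}
    (h : E ⊆ E' ∧ Loopless E' ∧ NoIllusion f E') :
    ∃ S, addCond f E S ∧ S.card ≤ (E' \ E).card := by
  obtain ⟨E0, h0, hmin⟩ := exists_minimalFor_of_wellFoundedLT
    (fun E' : Finset (Sym2 V) => E ⊆ E' ∧ Loopless E' ∧ NoIllusion f E')
    (fun E' => (E' \ E).card) ⟨E', h⟩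
  have hm : ∀ E'' : Finset (Sym2 V), E ⊆ E'' → Loopless E'' → NoIllusion f E'' →
      (E0 \ E).card ≤ (E'' \ E).card := by
    intro E'' a b c
    rcases le_total (E0 \ E).card (E'' \ E).card with hle | hle
    · exact hle
    · exact hmin ⟨a, b, c⟩ hle
  exact ⟨E0 \ E, optimal_addCond h0 hm, hm E' h.1 h.2.1 h.2.2⟩

/-- The minimum number of added edges over feasible MIAE solutions equals the minimum
cardinality of an edge set `S ⊆ E*` satisfying conditions (i) and (ii); moreover the sets
`E ∪ S` for minimizers `S` are exactly the optimal MIAE solutions. -/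
theorem stmt10 [Fintype V] [DecidableEq V] (f : V → Bool) (E : Finset (Sym2 V))
    (hE : Loopless E)
    (hmaj : (Finset.univ.filter (fun v => f v = false)).card <
      (Finset.univ.filter (fun v => f v = true)).card) :
    (∀ n : ℕ,
      IsLeast {m : ℕ | ∃ E' : Finset (Sym2 V),
        (E ⊆ E' ∧ Loopless E' ∧ NoIllusion f E') ∧ (E' \ E).card = m} n ↔
      IsLeast {m : ℕ | ∃ S : Finset (Sym2 V), addCond f E S ∧ S.card = m} n) ∧
    (∀ E' : Finset (Sym2 V),
      ((E ⊆ E' ∧ Loopless E' ∧ NoIllusion f E') ∧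
        (∀ E'' : Finset (Sym2 V), E ⊆ E'' → Loopless E'' → NoIllusion f E'' →
          (E' \ E).card ≤ (E'' \ E).card)) ↔
      (∃ S : Finset (Sym2 V), addCond f E S ∧
        (∀ S' : Finset (Sym2 V), addCond f E S' → S.card ≤ S'.card) ∧ E' = E ∪ S)) := by
  refine ⟨fun n => ⟨?_, ?_⟩, fun E' => ⟨?_, ?_⟩⟩
  · rintro ⟨⟨E', h, rfl⟩, hlb⟩
    refine ⟨⟨E' \ E, optimal_addCond h fun E'' a b c => hlb ⟨E'', ⟨a, b, c⟩, rfl⟩, rfl⟩, ?_⟩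
    rintro m ⟨S, hS, rfl⟩
    exact hlb ⟨E ∪ S, addCond_feasible hE hS, by rw [addCond_sdiff hS]⟩
  · rintro ⟨⟨S, hS, rfl⟩, hlb⟩
    refine ⟨⟨E ∪ S, addCond_feasible hE hS, by rw [addCond_sdiff hS]⟩, ?_⟩
    rintro m ⟨E', h, rfl⟩
    obtain ⟨T, hT, hle⟩ := exists_optimal h
    exact (hlb ⟨T, hT, rfl⟩).trans hle
  · rintro ⟨h, hopt⟩
    refine ⟨E' \ E, optimal_addCond h hopt, fun S hS => ?_,
      (Finset.union_sdiff_of_subset h.1).symm⟩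
    obtain ⟨a, b, c⟩ := addCond_feasible hE hS
    have := hopt _ a b c
    rwa [addCond_sdiff hS] at this
  · rintro ⟨S, hS, hmin, rfl⟩
    refine ⟨addCond_feasible hE hS, fun E'' a b c => ?_⟩
    rw [addCond_sdiff hS]
    obtain ⟨T, hT, hle⟩ := exists_optimal ⟨a, b, c⟩
    exact (hmin T hT).trans hle
end

section
/- Let G = (V, E) be a two-coloured graph, let E* be the set of all non-edges of G that are not between two red nodes, and for v ∈ V define b'(v) = max(r(v) - b(v), 0) if v is red, and b'(v) = (number of blue E*-neighbours of v) + b(v) - r(v) if v is blue. Let S ⊆ E* satisfy: (i) for every red node v, the number of edges of S incident to v equals b'(v); and (ii) for every blue node v, (the number of blue E*-neighbours u of v with uv ∉ S) plus (the number of red E*-neighbours u of v with uv ∈ S) is at most b'(v). Then for every subset X ⊆ V and every set F of edges of E* having exactly one endpoint in X, the following holds: (the number of edges of E* joining two blue nodes that lie in E*[X] ∪ F and are not in S) plus (the number of edges of E* joining a red node to a blue node that lie in E*[X] ∪ F and are in S) is at most the floor of (1/2)·(Σ_{v ∈ X} b'(v) + |F|), where E*[X] denotes the set of edges of E* with both endpoints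 in X. -/
open Finset

variable {V : Type*}

/-- `b'(v)`: `max(r(v)-b(v),0)` for red `v`, and
`#(blue E*-neighbours of v) + b(v) - r(v)` for blue `v`. -/
def bPrime [Fintype V] [DecidableEq V] (f : V → Bool) (E : Finset (Sym2 V)) (v : V) : ℤ :=
  if f v = false then max ((redDeg f E v : ℤ) - (blueDeg f E v : ℤ)) 0
  else ((Finset.univ.filter (fun u => f u = true ∧ s(u, v) ∈ avail f E)).card : ℤ)
    + (blueDeg f E v : ℤ) - (redDeg f E v : ℤ)

/-- Validity of the added constraints of (IP-1b): any integral solution `S` of (IP-1a)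
satisfies, for all `X ⊆ V` and all `F ⊆ δ_{E*}(X)`, the blossom-type inequality. -/
theorem stmt11 [Fintype V] [DecidableEq V] (f : V → Bool) (E : Finset (Sym2 V))
    (hE : Loopless E) (S : Finset (Sym2 V))
    (hS : S ⊆ avail f E)
    (hred : ∀ v : V, f v = false →
      ((S.filter (fun e => v ∈ e)).card : ℤ) = bPrime f E v)
    (hblue : ∀ v : V, f v = true →
      ((Finset.univ.filter (fun u => f u = true ∧ s(u, v) ∈ avail f E ∧ s(u, v) ∉ S)).card : ℤ)
        + ((Finset.univ.filter
            (fun u => f u = false ∧ s(u, v) ∈ avail f E ∧ s(u, v) ∈ S)).card : ℤ)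
        ≤ bPrime f E v) :
    ∀ X : Finset V, ∀ F : Finset (Sym2 V), F ⊆ avail f E →
      (∀ e ∈ F, ∃ u v : V, e = s(u, v) ∧ u ∈ X ∧ v ∉ X) →
      (((((avail f E).filter (fun e => ∀ v ∈ e, v ∈ X)) ∪ F).filter
          (fun e => (∀ v ∈ e, f v = true) ∧ e ∉ S)).card : ℤ)
        + (((((avail f E).filter (fun e => ∀ v ∈ e, v ∈ X)) ∪ F).filter
            (fun e => (∃ u v : V, e = s(u, v) ∧ f u = false ∧ f v = true) ∧ e ∈ S)).card : ℤ)
        ≤ Int.fdiv ((∑ v ∈ X, bPrime f E v) + (F.card : ℤ)) 2 := by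
  intro X F hF hFX
  set Y := ((avail f E).filter (fun e => ∀ v ∈ e, v ∈ X)) ∪ F with hY
  have hYa : ∀ e ∈ Y, e ∈ avail f E := by
    intro e he
    rw [hY, mem_union, mem_filter] at he
    rcases he with he | he
    · exact he.1
    · exact hF he
  set A1 := Y.filter (fun e => (∀ v ∈ e, f v = true) ∧ e ∉ S) with hA1
  set A2 := Y.filter
    (fun e => (∃ u v : V, e = s(u, v) ∧ f u = false ∧ f v = true) ∧ e ∈ S) with hA2
  have hdisj : Disjoint A1 A2 := by
    rw [Finset.disjoint_left]
    intro e h1 h2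
    exact (mem_filter.1 h1).2.2 (mem_filter.1 h2).2.2
  have hdeg : ∀ v : V,
      ((A1.filter (fun e => v ∈ e)).card : ℤ) + ((A2.filter (fun e => v ∈ e)).card : ℤ)
        ≤ bPrime f E v := by
    intro v
    cases hv : f v with
    | false =>
      have h1 : A1.filter (fun e => v ∈ e) = ∅ := by
        rw [Finset.filter_eq_empty_iff]
        intro e he hve
        have := (mem_filter.1 he).2.1 v hve
        simp [hv] at this
      have h2 : (A2.filter (fun e => v ∈ e)).card ≤ (S.filter (fun e => v ∈ e)).card := by
        apply card_le_card
        intro e he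
        rw [mem_filter] at he ⊢
        exact ⟨(mem_filter.1 he.1).2.2, he.2⟩
      rw [h1, ← hred v hv]
      simpa using h2
    | true =>
      refine le_trans (add_le_add ?_ ?_) (hblue v hv)
      · rw [Nat.cast_le]
        refine le_trans (card_le_card ?_) (card_image_le (f := fun u => s(u, v)))
        intro e he
        rw [mem_filter] at he
        obtain ⟨he, hve⟩ := he
        obtain ⟨u, rfl⟩ := Sym2.mem_iff_exists.1 hve
        rw [hA1, mem_filter] at he
        rw [mem_image]
        refine ⟨u, ?_, Sym2.eq_swap⟩
        rw [Sym2.eq_swap] at he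
        exact mem_filter.2 ⟨mem_univ _, he.2.1 u (Sym2.mem_mk_left _ _), hYa _ he.1, he.2.2⟩
      · rw [Nat.cast_le]
        refine le_trans (card_le_card ?_) (card_image_le (f := fun u => s(u, v)))
        intro e he
        rw [mem_filter] at he
        obtain ⟨he, hve⟩ := he
        rw [hA2, mem_filter] at he
        obtain ⟨heY, ⟨a, b, rfl, ha, hb⟩, heS⟩ := he
        rw [mem_image]
        rcases Sym2.mem_iff.1 hve with rfl | rfl
        · simp [ha] at hv
        · exact ⟨a, mem_filter.2 ⟨mem_univ _, ha, hYa _ heY, heS⟩, rfl⟩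
  have hedge : ∀ e ∈ Y, 2 ≤ (X.filter (fun v => v ∈ e)).card + (if e ∈ F then 1 else 0) := by
    intro e he
    by_cases heF : e ∈ F
    · obtain ⟨u, v, rfl, hu, hv⟩ := hFX e heF
      have : 0 < (X.filter (fun w => w ∈ s(u, v))).card :=
        card_pos.2 ⟨u, mem_filter.2 ⟨hu, Sym2.mem_mk_left _ _⟩⟩
      rw [if_pos heF]
      omega
    · rw [if_neg heF]
      rw [hY, mem_union, mem_filter] at he
      obtain ⟨hea, heX⟩ := he.resolve_right heF
      induction e using Sym2.ind with
      | _ a b =>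
        have hab : a ≠ b := by
          have := (mem_filter.1 hea).2.1
          simpa using this
        rw [add_zero, ← card_pair hab]
        apply card_le_card
        intro w hw
        have hw' : w ∈ s(a, b) := by simpa using hw
        exact mem_filter.2 ⟨heX w hw', hw'⟩
  have hswap : ∀ A : Finset (Sym2 V), ∑ e ∈ A, (X.filter (fun v => v ∈ e)).card
      = ∑ v ∈ X, (A.filter (fun e => v ∈ e)).card := by
    intro A
    simp only [card_filter]
    exact sum_comm
  have hmain : 2 * (A1 ∪ A2).card
      ≤ ∑ v ∈ X, ((A1 ∪ A2).filter (fun e => v ∈ e)).card + F.card := by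
    rw [← hswap]
    have hsub : ∀ e ∈ A1 ∪ A2, e ∈ Y := by
      intro e he
      rcases mem_union.1 he with he | he
      · exact (mem_filter.1 he).1
      · exact (mem_filter.1 he).1
    have h1 := sum_le_sum (fun e he => hedge e (hsub e he))
    rw [sum_const, sum_add_distrib, ← card_filter, smul_eq_mul, mul_comm] at h1
    have h2 : ((A1 ∪ A2).filter (fun e => e ∈ F)).card ≤ F.card :=
      card_le_card (fun e he => (mem_filter.1 he).2)
    omega
  have hsum : ((∑ v ∈ X, ((A1 ∪ A2).filter (fun e => v ∈ e)).card : ℕ) : ℤ)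
      ≤ ∑ v ∈ X, bPrime f E v := by
    rw [Nat.cast_sum]
    apply sum_le_sum
    intro v _
    refine le_trans ?_ (hdeg v)
    rw [filter_union]
    exact_mod_cast card_union_le _ _
  rw [card_union_of_disjoint hdisj] at hmain
  rw [Int.fdiv_eq_ediv_of_nonneg _ (by norm_num)]
  omega
end

section
/- Let G = (V, E) be a two-coloured graph in which the blue nodes form a clique (every two distinct blue nodes are adjacent) and there are strictly more blue nodes than red nodes. Then no blue node is under majority illusion in G. -/
open Finset

variable {V : Type*}

/-- If the blue nodes form a clique and blue is the strict majority, no blue node is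
under majority illusion. -/
theorem stmt12 [Fintype V] [DecidableEq V] (f : V → Bool) (E : Finset (Sym2 V))
    (hE : Loopless E)
    (hclique : ∀ u v : V, f u = true → f v = true → u ≠ v → s(u, v) ∈ E)
    (hmaj : (Finset.univ.filter (fun v => f v = false)).card <
      (Finset.univ.filter (fun v => f v = true)).card) :
    ∀ v : V, f v = true → redDeg f E v ≤ blueDeg f E v := by
  intro v hv
  have h1 : redDeg f E v ≤ (Finset.univ.filter (fun v => f v = false)).card := by
    unfold redDeg
    apply Finset.card_le_card
    intro u hu
    simp only [Finset.mem_filter, Finset.mem_univ, true_and] at hu ⊢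
    exact hu.2.2
  have h2 : ((Finset.univ.filter (fun v => f v = true)).erase v).card ≤ blueDeg f E v := by
    unfold blueDeg
    apply Finset.card_le_card
    intro u hu
    simp only [Finset.mem_erase, Finset.mem_filter, Finset.mem_univ, true_and] at hu ⊢
    exact ⟨hu.1, hclique u v hu.2 hv hu.1, hu.2⟩
  have h3 : v ∈ Finset.univ.filter (fun v => f v = true) := by simp [hv]
  rw [Finset.card_erase_of_mem h3] at h2
  omega
end

section
/- Let G = (V, E) be a two-coloured graph with strictly more blue nodes than red nodes, and let G^r = (V, E^r_0) be obtained from G by adding every non-edge between two blue nodes, so that the blue nodes form a clique in G^r. Then in every optimal MIRE solution E' of G^r, every edge of E^r_0 \ E' joins two red nodes. -/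
open Finset

variable {V : Type*}

/-- `G^r`: the graph obtained from `G` by adding every (non-)edge between two blue nodes. -/
def blueCliqueExt [Fintype V] [DecidableEq V] (f : V → Bool) (E : Finset (Sym2 V)) :
    Finset (Sym2 V) :=
  E ∪ Finset.univ.filter (fun e : Sym2 V => ¬ e.IsDiag ∧ ∀ v ∈ e, f v = true)

/-- In every optimal MIRE solution of `G^r`, every removed edge joins two red nodes. -/
theorem stmt13 [Fintype V] [DecidableEq V] (f : V → Bool) (E E' : Finset (Sym2 V))
    (hE : Loopless E)
    (hmaj : (Finset.univ.filter (fun v => f v = false)).card <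
      (Finset.univ.filter (fun v => f v = true)).card)
    (hsub : E' ⊆ blueCliqueExt f E) (hfeas : NoIllusion f E')
    (hopt : ∀ E'' : Finset (Sym2 V), E'' ⊆ blueCliqueExt f E → NoIllusion f E'' →
      (blueCliqueExt f E \ E').card ≤ (blueCliqueExt f E \ E'').card) :
    ∀ u v : V, s(u, v) ∈ blueCliqueExt f E \ E' → f u = false ∧ f v = false := by
  classical
  intro u v huv
  by_contra hne
  have hblue : ∃ w ∈ s(u, v), f w = true := by
    by_cases hu : f u = true
    · exact ⟨u, by simp, hu⟩
    · by_cases hv : f v = true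
      · exact ⟨v, by simp, hv⟩
      · exact absurd ⟨by simpa using hu, by simpa using hv⟩ hne
  rw [Finset.mem_sdiff] at huv
  set F := blueCliqueExt f E with hF
  let E'' : Finset (Sym2 V) := E' ∪ F.filter (fun e => ∃ w ∈ e, f w = true)
  have hsub'' : E'' ⊆ F := Finset.union_subset hsub (Finset.filter_subset _ _)
  have hfeas'' : NoIllusion f E'' := by
    intro x
    by_cases hx : f x = true
    · have h1 : redDeg f E'' x ≤ (Finset.univ.filter (fun v => f v = false)).card := by
        apply Finset.card_le_card
        intro y hy
        simp only [Finset.mem_filter] at hy ⊢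
        exact ⟨hy.1, hy.2.2.2⟩
      have h2 : (Finset.univ.filter (fun v => f v = true)).erase x ⊆
          Finset.univ.filter (fun y => y ≠ x ∧ s(y, x) ∈ E'' ∧ f y = true) := by
        intro y hy
        simp only [Finset.mem_erase, Finset.mem_filter, Finset.mem_univ, true_and] at hy ⊢
        refine ⟨hy.1, Finset.mem_union_right _ ?_, hy.2⟩
        refine Finset.mem_filter.2 ⟨?_, x, by simp, hx⟩
        refine Finset.mem_union_right _ (Finset.mem_filter.2 ⟨Finset.mem_univ _, ?_, ?_⟩)
        · simpa using hy.1
        · intro z hz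
          rcases Sym2.mem_iff.1 hz with rfl | rfl
          · exact hy.2
          · exact hx
      have h3 := Finset.card_le_card h2
      rw [Finset.card_erase_of_mem (by simpa using hx)] at h3
      change _ ≤ blueDeg f E'' x at h3
      omega
    · have h1 : redDeg f E'' x ≤ redDeg f E' x := by
        apply Finset.card_le_card
        intro y hy
        simp only [Finset.mem_filter] at hy ⊢
        refine ⟨hy.1, hy.2.1, ?_, hy.2.2.2⟩
        rcases Finset.mem_union.1 hy.2.2.1 with h | h
        · exact h
        · obtain ⟨z, hz, hz'⟩ := (Finset.mem_filter.1 h).2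
          rcases Sym2.mem_iff.1 hz with rfl | rfl
          · simp [hy.2.2.2] at hz'
          · exact absurd hz' hx
      have h2 : blueDeg f E' x ≤ blueDeg f E'' x := by
        apply Finset.card_le_card
        intro y hy
        simp only [Finset.mem_filter] at hy ⊢
        exact ⟨hy.1, hy.2.1, Finset.mem_union_left _ hy.2.2.1, hy.2.2.2⟩
      exact h1.trans ((hfeas x).trans h2)
  have hlt : (F \ E'').card < (F \ E').card := by
    apply Finset.card_lt_card
    rw [Finset.ssubset_iff_of_subset (Finset.sdiff_subset_sdiff le_rfl Finset.subset_union_left)]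
    refine ⟨s(u, v), Finset.mem_sdiff.2 huv, fun h => (Finset.mem_sdiff.1 h).2 ?_⟩
    exact Finset.mem_union_right _ (Finset.mem_filter.2 ⟨huv.1, hblue⟩)
  exact absurd (hopt E'' hsub'' hfeas'') (not_le.2 hlt)
end

section
/- Let G = (V, E) be a two-coloured graph with strictly more blue nodes than red nodes, and let G^a = (V, E^a_0) be obtained from G by removing every edge between two red nodes, so that the red nodes form an independent set in G^a. Then in every optimal MIAE solution E' of G^a, every edge of E' \ E^a_0 joins two blue nodes. -/
open Finset

variable {V : Type*}

/-- `G^a`: the graph obtained from `G` by removing every edge between two red nodes. -/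
def redIndepRestr [Fintype V] [DecidableEq V] (f : V → Bool) (E : Finset (Sym2 V)) :
    Finset (Sym2 V) :=
  E.filter (fun e : Sym2 V => ¬ (∀ v ∈ e, f v = false))

/-- In every optimal MIAE solution of `G^a`, every added edge joins two blue nodes. -/
theorem stmt14 [Fintype V] [DecidableEq V] (f : V → Bool) (E E' : Finset (Sym2 V))
    (hE : Loopless E)
    (hmaj : (Finset.univ.filter (fun v => f v = false)).card <
      (Finset.univ.filter (fun v => f v = true)).card)
    (hsub : redIndepRestr f E ⊆ E') (hloop : Loopless E') (hfeas : NoIllusion f E')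
    (hopt : ∀ E'' : Finset (Sym2 V), redIndepRestr f E ⊆ E'' → Loopless E'' →
      NoIllusion f E'' → (E' \ redIndepRestr f E).card ≤ (E'' \ redIndepRestr f E).card) :
    ∀ u v : V, s(u, v) ∈ E' \ redIndepRestr f E → f u = true ∧ f v = true := by
  classical
  intro u v huv
  by_contra hcon
  set E0 := redIndepRestr f E with hE0
  -- keep only the added edges joining two blue nodes
  set E2 : Finset (Sym2 V) := E0 ∪ E'.filter (fun e : Sym2 V => ∀ w ∈ e, f w = true) with hE2
  have hle : E2 ⊆ E' := Finset.union_subset hsub (Finset.filter_subset _ _)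
  have hfe : NoIllusion f E2 := by
    intro w
    cases hw : f w with
    | false =>
      have h0 : redDeg f E2 w = 0 := by
        unfold redDeg
        rw [Finset.card_eq_zero, Finset.filter_eq_empty_iff]
        rintro x - ⟨-, hx, hfx⟩
        rw [hE2, Finset.mem_union, hE0, redIndepRestr, Finset.mem_filter,
          Finset.mem_filter] at hx
        rcases hx with ⟨-, hx⟩ | ⟨-, hx⟩
        · apply hx
          intro y hy
          rcases Sym2.mem_iff.1 hy with rfl | rfl
          · exact hfx
          · exact hw
        · have := hx w (Sym2.mem_mk_right _ _)
          simp [hw] at this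
      omega
    | true =>
      have h1 : redDeg f E2 w ≤ redDeg f E' w := by
        unfold redDeg
        apply Finset.card_le_card
        intro x hx
        rw [Finset.mem_filter] at hx ⊢
        exact ⟨hx.1, hx.2.1, hle hx.2.2.1, hx.2.2.2⟩
      have h2 : blueDeg f E' w ≤ blueDeg f E2 w := by
        unfold blueDeg
        apply Finset.card_le_card
        intro x hx
        rw [Finset.mem_filter] at hx ⊢
        refine ⟨hx.1, hx.2.1, ?_, hx.2.2.2⟩
        rw [hE2, Finset.mem_union, Finset.mem_filter]
        refine Or.inr ⟨hx.2.2.1, ?_⟩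
        intro y hy
        rcases Sym2.mem_iff.1 hy with rfl | rfl
        · exact hx.2.2.2
        · exact hw
      exact h1.trans ((hfeas w).trans h2)
  have hge := hopt E2 Finset.subset_union_left (fun e he => hloop e (hle he)) hfe
  have hlt : (E2 \ E0).card < (E' \ E0).card := by
    apply Finset.card_lt_card
    refine (Finset.ssubset_iff_of_subset (Finset.sdiff_subset_sdiff hle (le_refl _))).2
      ⟨s(u, v), huv, ?_⟩
    intro hmem
    rw [Finset.mem_sdiff, hE2, Finset.mem_union, Finset.mem_filter] at hmem
    rcases hmem with ⟨h | ⟨-, h⟩, hn⟩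
    · exact hn h
    · exact hcon ⟨h u (Sym2.mem_mk_left _ _), h v (Sym2.mem_mk_right _ _)⟩
  omega
end

section
/- Let G = (V, E) be a two-coloured graph with strictly more blue nodes than red nodes. Let G^a = (V, E^a_0) be obtained from G by removing every edge between two red nodes, and let G^r = (V, E^r_0) be obtained from G by adding every non-edge between two blue nodes. Let A = E^a \ E^a_0 for an optimal MIAE solution E^a of G^a, and let D = E^r_0 \ E^r for an optimal MIRE solution E^r of G^r. Then no node is under illusion in (V, (E ∪ A) \ D), and |A| + |D| equals the minimum of |E \ E'| + |E' \ E| over all feasible MIE solutions E' of G; that is, (E ∪ A) \ D is an optimal MIE solution of G. -/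
open Finset

variable {V : Type*}

section Helpers
variable [Fintype V] [DecidableEq V] (f : V → Bool)

lemma redDeg_le_of {f : V → Bool} {S T : Finset (Sym2 V)} {v : V}
    (h : ∀ x, x ≠ v → f x = false → s(x, v) ∈ S → s(x, v) ∈ T) :
    redDeg f S v ≤ redDeg f T v := by
  apply Finset.card_le_card
  intro x hx
  simp only [Finset.mem_filter, Finset.mem_univ, true_and] at hx ⊢
  exact ⟨hx.1, h x hx.1 hx.2.2 hx.2.1, hx.2.2⟩

lemma blueDeg_le_of {f : V → Bool} {S T : Finset (Sym2 V)} {v : V}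
    (h : ∀ x, x ≠ v → f x = true → s(x, v) ∈ S → s(x, v) ∈ T) :
    blueDeg f S v ≤ blueDeg f T v := by
  apply Finset.card_le_card
  intro x hx
  simp only [Finset.mem_filter, Finset.mem_univ, true_and] at hx ⊢
  exact ⟨hx.1, h x hx.1 hx.2.2 hx.2.1, hx.2.2⟩

lemma redDeg_lt_of {f : V → Bool} {S T : Finset (Sym2 V)} {v : V}
    (h : ∀ x, x ≠ v → f x = false → s(x, v) ∈ S → s(x, v) ∈ T) (y : V) (hy : y ≠ v)
    (hf : f y = false) (hyS : s(y, v) ∉ S) (hyT : s(y, v) ∈ T) :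
    redDeg f S v < redDeg f T v := by
  apply Finset.card_lt_card
  rw [Finset.ssubset_iff_of_subset]
  · exact ⟨y, by simp [hy, hf, hyT], by simp [hyS]⟩
  · intro x hx
    simp only [Finset.mem_filter, Finset.mem_univ, true_and] at hx ⊢
    exact ⟨hx.1, h x hx.1 hx.2.2 hx.2.1, hx.2.2⟩

lemma blueDeg_lt_of {f : V → Bool} {S T : Finset (Sym2 V)} {v : V}
    (h : ∀ x, x ≠ v → f x = true → s(x, v) ∈ S → s(x, v) ∈ T) (y : V) (hy : y ≠ v)
    (hf : f y = true) (hyS : s(y, v) ∉ S) (hyT : s(y, v) ∈ T) :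
    blueDeg f S v < blueDeg f T v := by
  apply Finset.card_lt_card
  rw [Finset.ssubset_iff_of_subset]
  · exact ⟨y, by simp [hy, hf, hyT], by simp [hyS]⟩
  · intro x hx
    simp only [Finset.mem_filter, Finset.mem_univ, true_and] at hx ⊢
    exact ⟨hx.1, h x hx.1 hx.2.2 hx.2.1, hx.2.2⟩

/-- Total deficiency. -/
def deficit (S : Finset (Sym2 V)) : ℕ := ∑ v, (redDeg f S v - blueDeg f S v)

/-- A blue vertex adjacent to all other blue vertices is not under illusion. -/
lemma ok_of_blue_full {f : V → Bool}
    (hmaj : (Finset.univ.filter (fun v => f v = false)).card <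
      (Finset.univ.filter (fun v => f v = true)).card)
    {S : Finset (Sym2 V)} {u : V} (hu : f u = true)
    (h : ∀ w, w ≠ u → f w = true → s(w, u) ∈ S) : redDeg f S u ≤ blueDeg f S u := by
  have h1 : redDeg f S u ≤ (Finset.univ.filter (fun v => f v = false)).card := by
    apply Finset.card_le_card
    intro x hx
    simp only [Finset.mem_filter, Finset.mem_univ, true_and] at hx ⊢
    exact hx.2.2
  have h2 : ((Finset.univ.filter (fun v => f v = true)).erase u).card ≤ blueDeg f S u := by
    apply Finset.card_le_card
    intro x hx
    simp only [Finset.mem_erase, Finset.mem_filter, Finset.mem_univ, true_and] at hx ⊢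
    exact ⟨hx.1, h x hx.1 hx.2, hx.2⟩
  rw [Finset.card_erase_of_mem (by simp [hu])] at h2
  omega

lemma add_lemma {f : V → Bool}
    (hmaj : (Finset.univ.filter (fun v => f v = false)).card <
      (Finset.univ.filter (fun v => f v = true)).card) (k : ℕ) :
    ∀ S : Finset (Sym2 V), Loopless S →
      (∀ v, f v = false → redDeg f S v ≤ blueDeg f S v) → deficit f S ≤ k →
      ∃ S', S ⊆ S' ∧ Loopless S' ∧ NoIllusion f S' ∧ (S' \ S).card ≤ k := by
  induction k with
  | zero =>
    intro S hl _ hd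
    refine ⟨S, subset_rfl, hl, ?_, by simp⟩
    intro v
    have h0 : deficit f S = 0 := by omega
    have := (Finset.sum_eq_zero_iff.mp h0) v (Finset.mem_univ v)
    omega
  | succ k ih =>
    intro S hl hr hd
    by_cases hno : NoIllusion f S
    · exact ⟨S, subset_rfl, hl, hno, by simp⟩
    unfold NoIllusion at hno
    push Not at hno
    obtain ⟨u, hu⟩ := hno
    have hub : f u = true := by
      by_contra hc
      have := hr u (by simpa using hc)
      omega
    have : ∃ w, w ≠ u ∧ f w = true ∧ s(w, u) ∉ S := by
      by_contra hc
      push Not at hc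
      have := ok_of_blue_full hmaj hub hc
      omega
    obtain ⟨w, hwu, hwb, hwS⟩ := this
    have hred : ∀ v, redDeg f (insert s(w, u) S) v ≤ redDeg f S v := by
      intro v
      apply redDeg_le_of
      intro x hx hfx hxS
      rw [Finset.mem_insert] at hxS
      rcases hxS with h | h
      · rw [Sym2.eq_iff] at h
        rcases h with ⟨rfl, rfl⟩ | ⟨rfl, rfl⟩ <;> simp_all
      · exact h
    have hblue : ∀ v, blueDeg f S v ≤ blueDeg f (insert s(w, u) S) v := fun v =>
      blueDeg_le_of fun x _ _ h => Finset.mem_insert_of_mem h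
    have hblt : blueDeg f S u < blueDeg f (insert s(w, u) S) u :=
      blueDeg_lt_of (fun x _ _ h => Finset.mem_insert_of_mem h) w hwu hwb hwS
        (Finset.mem_insert_self _ _)
    have hdlt : deficit f (insert s(w, u) S) < deficit f S := by
      apply Finset.sum_lt_sum
      · intro v _
        have := hred v; have := hblue v
        omega
      · refine ⟨u, Finset.mem_univ u, ?_⟩
        have := hred u
        omega
    obtain ⟨S', h1, h2, h3, h4⟩ := ih (insert s(w, u) S) (by
      intro e he
      rw [Finset.mem_insert] at he
      rcases he with rfl | he
      · simpa using hwu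
      · exact hl e he) (fun v hv => (hred v).trans ((hr v hv).trans (hblue v))) (by omega)
    refine ⟨S', (Finset.subset_insert _ _).trans h1, h2, h3, ?_⟩
    have : S' \ S ⊆ insert s(w, u) (S' \ insert s(w, u) S) := by
      intro e he
      simp only [Finset.mem_sdiff, Finset.mem_insert] at he ⊢
      tauto
    have := Finset.card_le_card this
    have := Finset.card_insert_le s(w, u) (S' \ insert s(w, u) S)
    omega

lemma remove_lemma {f : V → Bool} (k : ℕ) :
    ∀ S : Finset (Sym2 V),
      (∀ v, f v = true → redDeg f S v ≤ blueDeg f S v) → deficit f S ≤ k →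
      ∃ S', S' ⊆ S ∧ NoIllusion f S' ∧ (S \ S').card ≤ k := by
  induction k with
  | zero =>
    intro S _ hd
    refine ⟨S, subset_rfl, ?_, by simp⟩
    intro v
    have h0 : deficit f S = 0 := by omega
    have := (Finset.sum_eq_zero_iff.mp h0) v (Finset.mem_univ v)
    omega
  | succ k ih =>
    intro S hr hd
    by_cases hno : NoIllusion f S
    · exact ⟨S, subset_rfl, hno, by simp⟩
    unfold NoIllusion at hno
    push Not at hno
    obtain ⟨u, hu⟩ := hno
    have hub : f u = false := by
      by_contra hc
      have := hr u (by simpa using hc)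
      omega
    have hpos : 0 < redDeg f S u := by omega
    obtain ⟨w, hw⟩ := Finset.card_pos.mp hpos
    simp only [Finset.mem_filter, Finset.mem_univ, true_and] at hw
    obtain ⟨hwu, hwS, hwb⟩ := hw
    have hred : ∀ v, redDeg f (S.erase s(w, u)) v ≤ redDeg f S v := fun v =>
      redDeg_le_of fun x _ _ h => Finset.mem_of_mem_erase h
    have hblue : ∀ v, blueDeg f S v ≤ blueDeg f (S.erase s(w, u)) v := by
      intro v
      apply blueDeg_le_of
      intro x hx hfx hxS
      rw [Finset.mem_erase]
      refine ⟨fun h => ?_, hxS⟩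
      rw [Sym2.eq_iff] at h
      rcases h with ⟨rfl, rfl⟩ | ⟨rfl, rfl⟩ <;> simp_all
    have hblt : redDeg f (S.erase s(w, u)) u < redDeg f S u :=
      redDeg_lt_of (fun x _ _ h => Finset.mem_of_mem_erase h) w hwu hwb (by simp) hwS
    have hdlt : deficit f (S.erase s(w, u)) < deficit f S := by
      apply Finset.sum_lt_sum
      · intro v _
        have := hred v; have := hblue v
        omega
      · refine ⟨u, Finset.mem_univ u, ?_⟩
        have := hblue u
        omega
    obtain ⟨S', h1, h3, h4⟩ := ih (S.erase s(w, u))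
      (fun v hv => (hred v).trans ((hr v hv).trans (hblue v))) (by omega)
    refine ⟨S', h1.trans (Finset.erase_subset _ _), h3, ?_⟩
    have : S \ S' ⊆ insert s(w, u) (S.erase s(w, u) \ S') := by
      intro e he
      simp only [Finset.mem_sdiff, Finset.mem_insert, Finset.mem_erase] at he ⊢
      tauto
    have := Finset.card_le_card this
    have := Finset.card_insert_le s(w, u) (S.erase s(w, u) \ S')
    omega

/-- Counting mixed edges from the endpoints of one colour. -/
lemma mixed_count (f : V → Bool) (F : Finset (Sym2 V)) (c : Bool) :
    ∑ u, (if f u = c then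
      (Finset.univ.filter (fun x => s(x, u) ∈ F ∧ f x = !c)).card else 0) ≤
    (F.filter (fun e => ¬ (∀ v ∈ e, f v = true) ∧ ¬ (∀ v ∈ e, f v = false))).card := by
  rw [← Finset.sum_filter, ← Finset.card_sigma]
  apply Finset.card_le_card_of_injOn (fun p => s(p.2, p.1))
  · rintro ⟨u, x⟩ h
    simp at h
    obtain ⟨h1, h2, h3⟩ := h
    simp [h1, h2, h3]
  · rintro ⟨u, x⟩ h ⟨u', x'⟩ h' heq
    simp at h h' heq
    rcases heq with ⟨rfl, rfl⟩ | ⟨rfl, rfl⟩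
    · rfl
    · simp_all

/-- Lower bound for one direction: adding edges. -/
lemma add_bound {f : V → Bool} {E E' : Finset (Sym2 V)} (hE : Loopless E)
    (hmaj : (Finset.univ.filter (fun v => f v = false)).card <
      (Finset.univ.filter (fun v => f v = true)).card)
    (hl : Loopless E') (hn : NoIllusion f E') :
    ∃ S, redIndepRestr f E ⊆ S ∧ Loopless S ∧ NoIllusion f S ∧
      (S \ redIndepRestr f E).card ≤ ((E' \ E).filter (fun e => ∀ v ∈ e, f v = true)).card +
      ((E \ E').filter
        (fun e => ¬ (∀ v ∈ e, f v = true) ∧ ¬ (∀ v ∈ e, f v = false))).card := by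
  set S0 := redIndepRestr f E ∪ E'.filter (fun e => ∀ v ∈ e, f v = true) with hS0
  have hmem : ∀ x y, s(x, y) ∈ S0 ↔ (s(x, y) ∈ E ∧ ¬ (f x = false ∧ f y = false)) ∨
      (s(x, y) ∈ E' ∧ f x = true ∧ f y = true) := by
    intro x y
    simp [hS0, redIndepRestr]
    cases f x <;> simp
  have hl0 : Loopless S0 := by
    intro e he
    rw [hS0, Finset.mem_union] at he
    rcases he with he | he
    · exact hE e (Finset.mem_filter.mp he).1
    · exact hl e (Finset.mem_filter.mp he).1
  have hredok : ∀ v, f v = false → redDeg f S0 v = 0 := by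
    intro v hv
    apply Finset.card_eq_zero.mpr
    apply Finset.filter_eq_empty_iff.mpr
    rintro x - ⟨_, h2, h3⟩
    rw [hmem] at h2
    simp_all
  have hd : deficit f S0 ≤ ((E \ E').filter
        (fun e => ¬ (∀ v ∈ e, f v = true) ∧ ¬ (∀ v ∈ e, f v = false))).card := by
    refine le_trans ?_ (mixed_count f (E \ E') true)
    apply Finset.sum_le_sum
    intro u _
    by_cases hu : f u = true
    · rw [if_pos hu]
      have h1 : redDeg f S0 u ≤ redDeg f E' u +
          (Finset.univ.filter (fun x => s(x, u) ∈ E \ E' ∧ f x = !true)).card := by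
        refine le_trans (Finset.card_le_card ?_) (Finset.card_union_le _ _)
        intro x hx
        simp only [Finset.mem_filter, Finset.mem_univ, true_and, Finset.mem_union,
          Finset.mem_sdiff, hmem] at hx ⊢
        by_cases s(x, u) ∈ E' <;> simp_all
      have h2 : blueDeg f E' u ≤ blueDeg f S0 u :=
        blueDeg_le_of fun x _ hx h => (hmem _ _).mpr (Or.inr ⟨h, hx, hu⟩)
      have := hn u
      omega
    · have := hredok u (by simpa using hu)
      omega
  obtain ⟨S, h1, h2, h3, h4⟩ := add_lemma hmaj _ S0 hl0
    (fun v hv => by rw [hredok v hv]; omega) hd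
  refine ⟨S, Finset.subset_union_left.trans h1, h2, h3, ?_⟩
  have hsub : S \ redIndepRestr f E ⊆
      ((E' \ E).filter (fun e => ∀ v ∈ e, f v = true)) ∪ (S \ S0) := by
    intro e
    induction e with | _ x y
    simp only [redIndepRestr, Finset.mem_sdiff, Finset.mem_union, Finset.mem_filter, hmem]
    simp
    intro ha hb
    by_cases s(x, y) ∈ E <;> by_cases s(x, y) ∈ E' <;> simp_all
  have := Finset.card_le_card hsub
  have := Finset.card_union_le ((E' \ E).filter (fun e => ∀ v ∈ e, f v = true)) (S \ S0)
  omega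

lemma remove_bound {f : V → Bool} {E E' : Finset (Sym2 V)}
    (hmaj : (Finset.univ.filter (fun v => f v = false)).card <
      (Finset.univ.filter (fun v => f v = true)).card)
    (hn : NoIllusion f E') :
    ∃ S, S ⊆ blueCliqueExt f E ∧ NoIllusion f S ∧
      (blueCliqueExt f E \ S).card ≤ ((E \ E').filter (fun e => ∀ v ∈ e, f v = false)).card +
      ((E' \ E).filter
        (fun e => ¬ (∀ v ∈ e, f v = true) ∧ ¬ (∀ v ∈ e, f v = false))).card := by
  set S0 := (blueCliqueExt f E).filter (fun e => (∀ v ∈ e, f v = false) → e ∈ E') with hS0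
  have hmem : ∀ x y, s(x, y) ∈ S0 ↔ (s(x, y) ∈ E ∨ (x ≠ y ∧ f x = true ∧ f y = true)) ∧
      ((f x = false ∧ f y = false) → s(x, y) ∈ E') := by
    intro x y
    simp [hS0, blueCliqueExt]
  have hblueok : ∀ v, f v = true → redDeg f S0 v ≤ blueDeg f S0 v := by
    intro v hv
    apply ok_of_blue_full hmaj hv
    intro w hw hwb
    rw [hmem]
    simp [hw, hwb, hv]
  have hd : deficit f S0 ≤ ((E' \ E).filter
        (fun e => ¬ (∀ v ∈ e, f v = true) ∧ ¬ (∀ v ∈ e, f v = false))).card := by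
    refine le_trans ?_ (mixed_count f (E' \ E) false)
    apply Finset.sum_le_sum
    intro u _
    by_cases hu : f u = false
    · rw [if_pos hu]
      have h1 : blueDeg f E' u ≤ blueDeg f S0 u +
          (Finset.univ.filter (fun x => s(x, u) ∈ E' \ E ∧ f x = !false)).card := by
        refine le_trans (Finset.card_le_card ?_) (Finset.card_union_le _ _)
        intro x hx
        simp only [Finset.mem_filter, Finset.mem_univ, true_and, Finset.mem_union,
          Finset.mem_sdiff, hmem] at hx ⊢
        by_cases s(x, u) ∈ E <;> simp_all
      have h2 : redDeg f S0 u ≤ redDeg f E' u :=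
        redDeg_le_of fun x _ hx h => ((hmem _ _).mp h).2 ⟨hx, hu⟩
      have := hn u
      omega
    · have := hblueok u (by simpa using hu)
      omega
  obtain ⟨S, h1, h3, h4⟩ := remove_lemma _ S0 hblueok hd
  refine ⟨S, h1.trans (Finset.filter_subset _ _), h3, ?_⟩
  have hsub : blueCliqueExt f E \ S ⊆
      ((E \ E').filter (fun e => ∀ v ∈ e, f v = false)) ∪ (S0 \ S) := by
    intro e
    induction e with | _ x y
    simp only [blueCliqueExt, Finset.mem_sdiff, Finset.mem_union, Finset.mem_filter, hmem]
    simp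
    intro ha hb
    by_cases s(x, y) ∈ E <;> by_cases s(x, y) ∈ E' <;> simp_all
  have := Finset.card_le_card hsub
  have := Finset.card_union_le ((E \ E').filter (fun e => ∀ v ∈ e, f v = false)) (S0 \ S)
  omega

lemma add_blue {f : V → Bool} {E Ea : Finset (Sym2 V)}
    (hEa_sub : redIndepRestr f E ⊆ Ea) (hEa_loop : Loopless Ea) (hEa_feas : NoIllusion f Ea)
    (hEa_opt : ∀ E'' : Finset (Sym2 V), redIndepRestr f E ⊆ E'' → Loopless E'' →
      NoIllusion f E'' → (Ea \ redIndepRestr f E).card ≤ (E'' \ redIndepRestr f E).card) :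
    ∀ e ∈ Ea \ redIndepRestr f E, ∀ v ∈ e, f v = true := by
  set T := Ea.filter (fun e => e ∈ redIndepRestr f E ∨ ∀ v ∈ e, f v = true) with hT
  have hTE : T ⊆ Ea := Finset.filter_subset _ _
  have hle := hEa_opt T
    (fun e he => Finset.mem_filter.mpr ⟨hEa_sub he, Or.inl he⟩)
    (fun e he => hEa_loop e (hTE he)) (by
      intro v
      by_cases hv : f v = true
      · refine le_trans (redDeg_le_of fun x _ _ h => hTE h) ((hEa_feas v).trans ?_)
        apply blueDeg_le_of
        intro x _ hx h
        simp [hT, h, hx, hv]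
      · have : redDeg f T v = 0 := by
          apply Finset.card_eq_zero.mpr
          apply Finset.filter_eq_empty_iff.mpr
          rintro x - ⟨_, h2, h3⟩
          simp [hT, redIndepRestr] at h2
          simp_all
        omega)
  have heq := Finset.eq_of_subset_of_card_le (Finset.sdiff_subset_sdiff hTE subset_rfl) hle
  intro e he
  have he2 := he
  rw [← heq] at he2
  have h1 := (Finset.mem_filter.mp (Finset.mem_sdiff.mp he2).1).2
  exact h1.resolve_left (Finset.mem_sdiff.mp he).2

lemma remove_red {f : V → Bool} {E Er : Finset (Sym2 V)}
    (hmaj : (Finset.univ.filter (fun v => f v = false)).card <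
      (Finset.univ.filter (fun v => f v = true)).card)
    (hEr_sub : Er ⊆ blueCliqueExt f E) (hEr_feas : NoIllusion f Er)
    (hEr_opt : ∀ E'' : Finset (Sym2 V), E'' ⊆ blueCliqueExt f E → NoIllusion f E'' →
      (blueCliqueExt f E \ Er).card ≤ (blueCliqueExt f E \ E'').card) :
    ∀ e ∈ blueCliqueExt f E \ Er, ∀ v ∈ e, f v = false := by
  set T := (blueCliqueExt f E).filter (fun e => e ∈ Er ∨ ¬ ∀ v ∈ e, f v = false) with hT
  have hET : Er ⊆ T := fun e he => Finset.mem_filter.mpr ⟨hEr_sub he, Or.inl he⟩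
  have hle := hEr_opt T (Finset.filter_subset _ _) (by
      intro v
      by_cases hv : f v = true
      · apply ok_of_blue_full hmaj hv
        intro w hw hwb
        simp [hT, blueCliqueExt, hw, hwb, hv]
      · refine le_trans ?_ ((hEr_feas v).trans (blueDeg_le_of fun x _ _ h => hET h))
        apply redDeg_le_of
        intro x _ hx h
        simp [hT] at h
        simp_all)
  have heq := Finset.eq_of_subset_of_card_le (Finset.sdiff_subset_sdiff subset_rfl hET) hle
  intro e he
  by_contra hc
  have he2 := he
  rw [← heq] at he2
  exact (Finset.mem_sdiff.mp he2).2
    (Finset.mem_filter.mpr ⟨(Finset.mem_sdiff.mp he).1, Or.inr hc⟩)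

end Helpers

/-- Combining the added edges `A` of an optimal MIAE solution of `G^a` with the removed
edges `D` of an optimal MIRE solution of `G^r` yields an optimal MIE solution of `G`. -/
theorem stmt15 [Fintype V] [DecidableEq V] (f : V → Bool) (E Ea Er : Finset (Sym2 V))
    (hE : Loopless E)
    (hmaj : (Finset.univ.filter (fun v => f v = false)).card <
      (Finset.univ.filter (fun v => f v = true)).card)
    -- `Ea` is an optimal MIAE solution of `G^a = (V, redIndepRestr f E)`
    (hEa_sub : redIndepRestr f E ⊆ Ea) (hEa_loop : Loopless Ea) (hEa_feas : NoIllusion f Ea)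
    (hEa_opt : ∀ E'' : Finset (Sym2 V), redIndepRestr f E ⊆ E'' → Loopless E'' →
      NoIllusion f E'' → (Ea \ redIndepRestr f E).card ≤ (E'' \ redIndepRestr f E).card)
    -- `Er` is an optimal MIRE solution of `G^r = (V, blueCliqueExt f E)`
    (hEr_sub : Er ⊆ blueCliqueExt f E) (hEr_feas : NoIllusion f Er)
    (hEr_opt : ∀ E'' : Finset (Sym2 V), E'' ⊆ blueCliqueExt f E → NoIllusion f E'' →
      (blueCliqueExt f E \ Er).card ≤ (blueCliqueExt f E \ E'').card) :
    NoIllusion f ((E ∪ (Ea \ redIndepRestr f E)) \ (blueCliqueExt f E \ Er)) ∧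
    (∀ E' : Finset (Sym2 V), Loopless E' → NoIllusion f E' →
      (E \ ((E ∪ (Ea \ redIndepRestr f E)) \ (blueCliqueExt f E \ Er))).card +
        (((E ∪ (Ea \ redIndepRestr f E)) \ (blueCliqueExt f E \ Er)) \ E).card ≤
      (E \ E').card + (E' \ E).card) ∧
    IsLeast {m : ℕ | ∃ E' : Finset (Sym2 V), Loopless E' ∧ NoIllusion f E' ∧
        (E \ E').card + (E' \ E).card = m}
      ((Ea \ redIndepRestr f E).card + (blueCliqueExt f E \ Er).card) := by
  have hA := add_blue hEa_sub hEa_loop hEa_feas hEa_opt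
  have hD := remove_red hmaj hEr_sub hEr_feas hEr_opt
  set A := Ea \ redIndepRestr f E with hAdef
  set D := blueCliqueExt f E \ Er with hDdef
  have hne : ∀ e : Sym2 V, (∀ v ∈ e, f v = true) → ¬ ∀ v ∈ e, f v = false := by
    intro e
    induction e with | _ x y
    simp
    intro h1 h2 h3
    simp_all
  have hDE : D ⊆ E := by
    intro e he
    have h1 := (Finset.mem_sdiff.mp he).1
    rcases Finset.mem_union.mp h1 with h | h
    · exact h
    · exact absurd (hD e he) (hne e (Finset.mem_filter.mp h).2.2)
  have hAE : ∀ e ∈ A, e ∉ E := by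
    intro e he heE
    exact (Finset.mem_sdiff.mp he).2 (Finset.mem_filter.mpr ⟨heE, hne e (hA e he)⟩)
  have hR : E \ ((E ∪ A) \ D) = D := by
    ext e
    have := @hDE e
    simp only [Finset.mem_sdiff, Finset.mem_union]
    tauto
  have hAd : ((E ∪ A) \ D) \ E = A := by
    ext e
    have := @hDE e
    have := hAE e
    simp only [Finset.mem_sdiff, Finset.mem_union]
    tauto
  have hfeas : NoIllusion f ((E ∪ A) \ D) := by
    intro v
    by_cases hv : f v = true
    · have h1 : redDeg f ((E ∪ A) \ D) v ≤ redDeg f Ea v := by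
        apply redDeg_le_of
        intro x _ hx h
        rcases Finset.mem_union.mp (Finset.mem_sdiff.mp h).1 with h | h
        · exact hEa_sub (Finset.mem_filter.mpr ⟨h, by simp [hv]⟩)
        · exact (Finset.mem_sdiff.mp h).1
      have h2 : blueDeg f Ea v ≤ blueDeg f ((E ∪ A) \ D) v := by
        apply blueDeg_le_of
        intro x _ hx h
        refine Finset.mem_sdiff.mpr ⟨Finset.mem_union.mpr ?_, fun hd => ?_⟩
        · by_cases h' : s(x, v) ∈ redIndepRestr f E
          · exact Or.inl (Finset.mem_filter.mp h').1
          · exact Or.inr (Finset.mem_sdiff.mpr ⟨h, h'⟩)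
        · have := hD _ hd v (by simp)
          simp_all
      exact h1.trans ((hEa_feas v).trans h2)
    · have h1 : redDeg f ((E ∪ A) \ D) v ≤ redDeg f Er v := by
        apply redDeg_le_of
        intro x _ hx h
        obtain ⟨h, hnd⟩ := Finset.mem_sdiff.mp h
        rcases Finset.mem_union.mp h with h | h
        · by_contra hc
          exact hnd (Finset.mem_sdiff.mpr ⟨Finset.mem_union_left _ h, hc⟩)
        · exact absurd (hA _ h v (by simp)) hv
      have h2 : blueDeg f Er v ≤ blueDeg f ((E ∪ A) \ D) v := by
        apply blueDeg_le_of
        intro x _ hx h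
        refine Finset.mem_sdiff.mpr ⟨Finset.mem_union_left _ ?_, fun hd => ?_⟩
        · rcases Finset.mem_union.mp (hEr_sub h) with h | h
          · exact h
          · exact absurd ((Finset.mem_filter.mp h).2.2 v (by simp)) hv
        · have := hD _ hd x (by simp)
          simp_all
      exact h1.trans ((hEr_feas v).trans h2)
  have hlow : ∀ E' : Finset (Sym2 V), Loopless E' → NoIllusion f E' →
      A.card + D.card ≤ (E \ E').card + (E' \ E).card := by
    intro E' hl hn
    obtain ⟨S, s1, s2, s3, s4⟩ := add_bound hE hmaj hl hn
    obtain ⟨T, t1, t2, t3⟩ := remove_bound (E := E) hmaj hn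
    have ha := hEa_opt S s1 s2 s3
    have hb := hEr_opt T t1 t2
    have p1 : ((E' \ E).filter (fun e => ∀ v ∈ e, f v = true)).card +
        ((E' \ E).filter (fun e => ¬ (∀ v ∈ e, f v = true) ∧
          ¬ (∀ v ∈ e, f v = false))).card ≤ (E' \ E).card := by
      rw [← Finset.card_union_of_disjoint]
      · exact Finset.card_le_card (Finset.union_subset (Finset.filter_subset _ _)
          (Finset.filter_subset _ _))
      · exact Finset.disjoint_filter.mpr (fun e _ h h' => h'.1 h)
    have p2 : ((E \ E').filter (fun e => ∀ v ∈ e, f v = false)).card +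
        ((E \ E').filter (fun e => ¬ (∀ v ∈ e, f v = true) ∧
          ¬ (∀ v ∈ e, f v = false))).card ≤ (E \ E').card := by
      rw [← Finset.card_union_of_disjoint]
      · exact Finset.card_le_card (Finset.union_subset (Finset.filter_subset _ _)
          (Finset.filter_subset _ _))
      · exact Finset.disjoint_filter.mpr (fun e _ h h' => h'.2 h)
    omega
  refine ⟨hfeas, ?_, ⟨(E ∪ A) \ D, ?_, hfeas, ?_⟩, ?_⟩
  · intro E' hl hn
    rw [hR, hAd, add_comm]
    exact hlow E' hl hn
  · intro e he
    rcases Finset.mem_union.mp (Finset.mem_sdiff.mp he).1 with h | h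
    · exact hE e h
    · exact hEa_loop e (Finset.mem_sdiff.mp h).1
  · rw [hR, hAd, add_comm]
  · rintro m ⟨E', hl, hn, rfl⟩
    exact hlow E' hl hn
end

section
/- Let a and l be coprime positive integers with a < l, let C and W be finite index sets with |C| = n, and let x_b, x_r : C -> ℕ and y_b, y_r : W -> ℕ be functions satisfying: (i) x_b(c) + ⌊a·x_r(c)/l⌋ = 1 for every c ∈ C; (ii) Σ_{c ∈ C} x_b(c) = Σ_{w ∈ W} ( y_r(w) + ⌊l·y_b(w)/a⌋ ); and (iii) Σ_{c ∈ C} (x_r(c) + x_b(c)) + Σ_{w ∈ W} (y_r(w) + y_b(w)) ≤ n·(a + l)/l, where the inequality (iii) is over the rationals. Then x_r(c) = 0 and x_b(c) = 1 for every c ∈ C, y_r(w) = 0 for every w ∈ W, a divides y_b(w) for every w ∈ W, and Σ_{w ∈ W} y_b(w) = n·a/l. -/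
open Finset

/-- The arithmetic core of the NP-hardness reduction: the counting identities force the
edge alterations to encode an exact satisfying assignment. Here `m / k` on ℕ is floor
division. -/
theorem stmt18 {α β : Type*} [DecidableEq α] [DecidableEq β]
    (a l n : ℕ) (ha : 0 < a) (hl : 0 < l) (hal : a < l) (hco : Nat.Coprime a l)
    (C : Finset α) (W : Finset β) (hC : C.card = n)
    (xb xr : α → ℕ) (yb yr : β → ℕ)
    (h1 : ∀ c ∈ C, xb c + (a * xr c) / l = 1)
    (h2 : ∑ c ∈ C, xb c = ∑ w ∈ W, (yr w + (l * yb w) / a))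
    (h3 : ((∑ c ∈ C, (xr c + xb c) : ℕ) : ℚ) + ((∑ w ∈ W, (yr w + yb w) : ℕ) : ℚ)
      ≤ (n : ℚ) * ((a : ℚ) + (l : ℚ)) / (l : ℚ)) :
    (∀ c ∈ C, xr c = 0 ∧ xb c = 1) ∧
    (∀ w ∈ W, yr w = 0) ∧
    (∀ w ∈ W, a ∣ yb w) ∧
    ((∑ w ∈ W, yb w : ℕ) : ℚ) = (n : ℚ) * (a : ℚ) / (l : ℚ) := by
  have hc : ∀ c ∈ C, a + l ≤ l * (xr c + xb c) + a * xb c := by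
    intro c hcC
    have h := h1 c hcC
    rcases Nat.eq_zero_or_pos (xb c) with h0 | h0
    · have hq : a * xr c / l = 1 := by omega
      have h5 : 1 * l ≤ a * xr c := (Nat.le_div_iff_mul_le hl).1 hq.ge
      have h6 : 2 ≤ xr c := by
        by_contra hlt
        have : xr c ≤ 1 := by omega
        nlinarith
      rw [h0]; nlinarith
    · have hb : xb c = 1 := by linarith [Nat.zero_le (a * xr c / l), le_antisymm (le_of_add_le_left h.le) h0]
      rw [hb]; nlinarith [Nat.zero_le (l * xr c)]
  have hf : ∀ w, a * (l * yb w / a) ≤ l * yb w := fun w => Nat.mul_div_le _ _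
  have hw : ∀ w ∈ W, a * (yr w + l * yb w / a) ≤ l * (yr w + yb w) := by
    intro w _
    nlinarith [hf w, Nat.mul_le_mul_right (yr w) hal.le]
  have hlq : (0 : ℚ) < l := by exact_mod_cast hl
  have h4 : l * ((∑ c ∈ C, (xr c + xb c)) + ∑ w ∈ W, (yr w + yb w)) ≤ n * (a + l) := by
    rw [le_div_iff₀ hlq] at h3
    rw [mul_comm l]
    exact_mod_cast (by rw [add_mul] at h3 ⊢; exact_mod_cast h3)
  have sC := Finset.sum_le_sum hc
  have sW := Finset.sum_le_sum hw
  have eC0 : ∑ c ∈ C, (a + l) = n * (a + l) := by simp [hC]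
  have eC1 : ∑ c ∈ C, (l * (xr c + xb c) + a * xb c)
      = l * ∑ c ∈ C, (xr c + xb c) + a * ∑ c ∈ C, xb c := by
    rw [Finset.sum_add_distrib, Finset.mul_sum, Finset.mul_sum]
  have eW0 : ∑ w ∈ W, a * (yr w + l * yb w / a) = a * ∑ c ∈ C, xb c := by
    rw [h2, Finset.mul_sum]
  have eW1 : ∑ w ∈ W, l * (yr w + yb w) = l * ∑ w ∈ W, (yr w + yb w) := by
    rw [Finset.mul_sum]
  rw [mul_add] at h4
  have EC := (Finset.sum_eq_sum_iff_of_le hc).1 (by omega)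
  have EWs : ∑ w ∈ W, a * (yr w + l * yb w / a) = ∑ w ∈ W, l * (yr w + yb w) := by omega
  have EW := (Finset.sum_eq_sum_iff_of_le hw).1 EWs
  have rC : ∀ c ∈ C, xr c = 0 ∧ xb c = 1 := by
    intro c hcC
    have h := h1 c hcC
    have e := EC c hcC
    rcases Nat.eq_zero_or_pos (xb c) with h0 | h0
    · exfalso
      have hq : a * xr c / l = 1 := by omega
      have h5 : 1 * l ≤ a * xr c := (Nat.le_div_iff_mul_le hl).1 hq.ge
      have h6 : 2 ≤ xr c := by
        by_contra hlt
        have : xr c ≤ 1 := by omega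
        nlinarith
      rw [h0] at e; nlinarith
    · have hb : xb c = 1 := by linarith [Nat.zero_le (a * xr c / l), le_antisymm (le_of_add_le_left h.le) h0]
      rw [hb] at e
      refine ⟨?_, hb⟩
      have : l * xr c = 0 := by linarith
      rcases Nat.mul_eq_zero.1 this with h | h
      · omega
      · exact h
  have rW : ∀ w ∈ W, yr w = 0 := by
    intro w hwW
    have e := EW w hwW
    have := hf w
    by_contra hne
    have := Nat.mul_lt_mul_of_pos_right hal (Nat.pos_of_ne_zero hne)
    nlinarith
  refine ⟨rC, rW, ?_, ?_⟩
  · intro w hwW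
    have e := EW w hwW
    rw [rW w hwW, zero_add, zero_add] at e
    exact hco.dvd_of_dvd_mul_left ⟨_, e.symm⟩
  · have s1 : ∑ c ∈ C, xb c = n := by
      rw [Finset.sum_congr rfl (fun c h => (rC c h).2)]; simp [hC]
    have s2 : ∑ w ∈ W, (yr w + yb w) = ∑ w ∈ W, yb w :=
      Finset.sum_congr rfl (fun w h => by rw [rW w h, zero_add])
    rw [eW0, eW1, s1, s2] at EWs
    rw [eq_div_iff hlq.ne']
    have : (∑ w ∈ W, yb w) * l = n * a := by linarith
    exact_mod_cast this
end
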